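/- arXiv:2406.06268 — 4 statements merged into one kernel-verified Lean document; each statement's English description precedes it below -/
import Mathlib

section
/- Let m₁, m₂ ≥ 1 be integers, p ∈ [1, ∞], α > 0, and let f : (0,∞) → [0,∞) be measurable, vanishing outside (0, α], and satisfying ∫₀^{α} f(t) Φ(iρ_p, t) Δ(t) dt < ∞. Then for every λ ∈ ℝ, | ∫₀^{α} f(t) Φ(λ + iρ_p, t) Δ(t) dt | ≥ ∫₀^{α} f(t) Ψ_p(λ, t) Δ(t) dt, where Ψ_p(λ, t) = (c₀ sinh(2t)/Δ(t)) ∫₀^{t} (cosh 2t − cosh 2s)^{m₂/2−1} ( ∫₀^{s} (cosh s − cosh r)^{m₁/2−1} cos(λ r) cosh(ρ_p r) dr ) sinh s ds. -/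
open Set intervalIntegral MeasureTheory

/-- The density `Δ(t) = (2 sinh t)^{m₁+m₂} (2 cosh t)^{m₂}`. -/
noncomputable def Δ (m₁ m₂ : ℕ) (t : ℝ) : ℝ :=
  (2 * Real.sinh t) ^ (m₁ + m₂) * (2 * Real.cosh t) ^ m₂

/-- The constant `c₀ = √π 2^{m₂/2-2} Γ((n-1)/2)/Γ(n/2)`, `n = m₁+m₂+1`. -/
noncomputable def c₀ (m₁ m₂ : ℕ) : ℝ :=
  Real.sqrt Real.pi * 2 ^ ((m₂ : ℝ)/2 - 2) *
    Real.Gamma (((m₁ : ℝ) + m₂ + 1 - 1)/2) / Real.Gamma (((m₁ : ℝ) + m₂ + 1)/2)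

/-- The half-sum of positive roots `ρ = (m₁ + 2m₂)/2`. -/
noncomputable def ρ₀ (m₁ m₂ : ℕ) : ℝ := ((m₁ : ℝ) + 2 * m₂) / 2

/-- `ρ_p = (2/p - 1) ρ` for `p ∈ [1,∞]` (for `p = ∞` this is `-ρ`). -/
noncomputable def rhoP (m₁ m₂ : ℕ) (p : ENNReal) : ℝ := (2 / p.toReal - 1) * ρ₀ m₁ m₂

/-- The Koornwinder integral representation of the elementary spherical function
`φ_z(a_t)`, `z ∈ ℂ`. -/
noncomputable def PhiC (m₁ m₂ : ℕ) (z : ℂ) (t : ℝ) : ℂ :=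
  ((c₀ m₁ m₂ * Real.sinh (2*t) / Δ m₁ m₂ t : ℝ) : ℂ) *
    ∫ s in (0:ℝ)..t,
      (((Real.cosh (2*t) - Real.cosh (2*s)) ^ ((m₂ : ℝ)/2 - 1) : ℝ) : ℂ) *
      (∫ r in (0:ℝ)..s,
        (((Real.cosh s - Real.cosh r) ^ ((m₁ : ℝ)/2 - 1) : ℝ) : ℂ) * Complex.cos (z * r)) *
      ((Real.sinh s : ℝ) : ℂ)

/-- The kernel `Ψ_p(λ,t)`, i.e. the "cosine part" of `Φ(λ + iρ_p, t)`. -/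
noncomputable def Psi (m₁ m₂ : ℕ) (p : ENNReal) (lam t : ℝ) : ℝ :=
  (c₀ m₁ m₂ * Real.sinh (2*t) / Δ m₁ m₂ t) *
    ∫ s in (0:ℝ)..t, (Real.cosh (2*t) - Real.cosh (2*s)) ^ ((m₂ : ℝ)/2 - 1) *
      (∫ r in (0:ℝ)..s, (Real.cosh s - Real.cosh r) ^ ((m₁ : ℝ)/2 - 1) *
        (Real.cos (lam * r) * Real.cosh (rhoP m₁ m₂ p * r))) *
      Real.sinh s

lemma meas_param (F : ℝ → ℝ → ℂ) (hF : Measurable (Function.uncurry F)) :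
    Measurable (fun t : ℝ => ∫ s in (0:ℝ)..t, F t s) := by
  have h1 : MeasurableSet {q : ℝ × ℝ | 0 < q.2 ∧ q.2 ≤ q.1} :=
    (measurableSet_lt measurable_const measurable_snd).inter
      (measurableSet_le measurable_snd measurable_fst)
  have h2 : MeasurableSet {q : ℝ × ℝ | q.1 < q.2 ∧ q.2 ≤ 0} :=
    (measurableSet_lt measurable_fst measurable_snd).inter
      (measurableSet_le measurable_snd measurable_const)
  have e1 := ((hF.indicator h1).stronglyMeasurable.integral_prod_right'
    (ν := (volume : Measure ℝ))).measurable
  have e2 := ((hF.indicator h2).stronglyMeasurable.integral_prod_right'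
    (ν := (volume : Measure ℝ))).measurable
  convert e1.sub e2 using 1
  ext t
  simp only [intervalIntegral, Pi.sub_apply]
  rw [← MeasureTheory.integral_indicator measurableSet_Ioc,
    ← MeasureTheory.integral_indicator measurableSet_Ioc]
  congr 1

noncomputable def KK (m : ℕ) (s r : ℝ) : ℝ := (Real.cosh s - Real.cosh r) ^ ((m : ℝ)/2 - 1)

lemma KK_meas (m : ℕ) : Measurable (Function.uncurry (KK m)) := by
  unfold KK Function.uncurry
  fun_prop

lemma KK_base {s r : ℝ} (hr : 0 ≤ r) (hs : r ≤ s) :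
    s * (s - r) / 2 ≤ Real.cosh s - Real.cosh r := by
  have e : Real.cosh s - Real.cosh r = 2 * Real.sinh ((s+r)/2) * Real.sinh ((s-r)/2) := by
    have a : s = (s+r)/2 + (s-r)/2 := by ring
    have b : r = (s+r)/2 - (s-r)/2 := by ring
    conv_lhs => rw [a, Real.cosh_add]
    conv_lhs => rw [b, Real.cosh_sub]
    ring
  have h1 : (s+r)/2 ≤ Real.sinh ((s+r)/2) := Real.self_le_sinh_iff.2 (by linarith)
  have h2 : (s-r)/2 ≤ Real.sinh ((s-r)/2) := Real.self_le_sinh_iff.2 (by linarith)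
  have h3 : (s+r)/2 * ((s-r)/2) ≤ Real.sinh ((s+r)/2) * Real.sinh ((s-r)/2) :=
    mul_le_mul h1 h2 (by linarith) (le_trans (by linarith) h1)
  rw [e]
  nlinarith [mul_nonneg hr (sub_nonneg.2 hs)]

lemma KK_nonneg (m : ℕ) {s r : ℝ} (hr : 0 ≤ r) (hs : r ≤ s) : 0 ≤ KK m s r := by
  apply Real.rpow_nonneg
  have := KK_base hr hs
  have : 0 ≤ s * (s - r) := mul_nonneg (hr.trans hs) (sub_nonneg.2 hs)
  linarith

lemma KK_bd (m : ℕ) (hm : 1 ≤ m) {A s r : ℝ} (hA : s ≤ A) (h0 : 0 < s) (hr : 0 ≤ r)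
    (hs : r ≤ s) :
    KK m s r ≤ Real.cosh A ^ ((m : ℝ)/2 - 1)
      + (s/2) ^ (-(1/2) : ℝ) * (s - r) ^ (-(1/2) : ℝ) := by
  have hb := KK_base hr hs
  have hn : 0 ≤ s * (s - r) := mul_nonneg (hr.trans hs) (sub_nonneg.2 hs)
  have p1 : 0 ≤ Real.cosh A ^ ((m : ℝ)/2 - 1) := Real.rpow_nonneg (Real.cosh_pos _).le _
  have p2 : 0 ≤ (s/2) ^ (-(1/2) : ℝ) * (s - r) ^ (-(1/2) : ℝ) :=
    mul_nonneg (Real.rpow_nonneg (by linarith) _) (Real.rpow_nonneg (by linarith) _)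
  unfold KK
  rcases Nat.lt_or_ge m 2 with h | h
  · have : m = 1 := by omega
    subst this
    have e : (((1:ℕ) : ℝ)/2 - 1) = -(1/2) := by norm_num
    rw [e] at p1 ⊢
    refine le_trans ?_ (le_add_of_nonneg_left p1)
    rw [← Real.mul_rpow (by linarith) (by linarith)]
    rcases hs.eq_or_lt with h | h
    · subst h; simp
    · apply Real.rpow_le_rpow_of_nonpos
      · exact mul_pos (by linarith) (by linarith)
      · linarith
      · norm_num
  · refine le_trans ?_ (le_add_of_nonneg_right p2)
    have h' : (2:ℝ) ≤ m := by exact_mod_cast h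
    apply Real.rpow_le_rpow (by linarith) _ (by linarith)
    have : Real.cosh s ≤ Real.cosh A :=
      Real.cosh_le_cosh.2 (by rw [abs_of_pos h0, abs_of_pos (h0.trans_le hA)]; exact hA)
    linarith [Real.cosh_pos r]

lemma maj_int (C D s : ℝ) : IntervalIntegrable
    (fun r : ℝ => C + D * (s - r) ^ (-(1/2) : ℝ)) volume 0 s := by
  apply intervalIntegrable_const.add
  apply IntervalIntegrable.const_mul
  have := (intervalIntegral.intervalIntegrable_rpow' (a := 0) (b := s)
    (r := (-(1/2) : ℝ)) (by norm_num)).comp_sub_left s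
  simpa using this.symm

lemma KK_int (m : ℕ) (hm : 1 ≤ m) {s : ℝ} (h0 : 0 < s) :
    IntervalIntegrable (KK m s) volume 0 s := by
  have hM : Measurable (KK m s) := by unfold KK; fun_prop
  refine (maj_int (Real.cosh s ^ ((m : ℝ)/2 - 1)) ((s/2) ^ (-(1/2) : ℝ)) s).mono_fun'
    hM.aestronglyMeasurable ?_
  rw [uIoc_of_le h0.le]
  filter_upwards [ae_restrict_mem measurableSet_Ioc] with r hr
  rw [Real.norm_of_nonneg (KK_nonneg m hr.1.le hr.2)]
  exact KK_bd m hm le_rfl h0 hr.1.le hr.2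

lemma KK_int_le (m : ℕ) (hm : 1 ≤ m) {A s : ℝ} (h0 : 0 < s) (hA : s ≤ A) :
    ∫ r in (0:ℝ)..s, KK m s r ≤ Real.cosh A ^ ((m : ℝ)/2 - 1) * A + 2 * Real.sqrt 2 := by
  have h1 : ∫ r in (0:ℝ)..s, KK m s r ≤ ∫ r in (0:ℝ)..s, (Real.cosh A ^ ((m : ℝ)/2 - 1)
      + (s/2) ^ (-(1/2) : ℝ) * (s - r) ^ (-(1/2) : ℝ)) := by
    apply intervalIntegral.integral_mono_on h0.le (KK_int m hm h0) (maj_int _ _ _)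
    intro r hr
    exact KK_bd m hm hA h0 hr.1 hr.2
  refine h1.trans ?_
  have hi : IntervalIntegrable
      (fun r : ℝ => (s/2) ^ (-(1/2) : ℝ) * (s - r) ^ (-(1/2) : ℝ)) volume 0 s := by
    simpa using maj_int 0 ((s/2) ^ (-(1/2) : ℝ)) s
  rw [intervalIntegral.integral_add intervalIntegrable_const hi,
    intervalIntegral.integral_const_mul,
    intervalIntegral.integral_comp_sub_left (fun x => x ^ (-(1/2) : ℝ)) s,
    integral_rpow (by left; norm_num)]
  have p1 : 0 ≤ Real.cosh A ^ ((m : ℝ)/2 - 1) := Real.rpow_nonneg (Real.cosh_pos _).le _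
  have e : (s/2) ^ (-(1/2) : ℝ) * (s ^ ((1:ℝ)/2) / (1/2)) = 2 * Real.sqrt 2 := by
    rw [Real.rpow_neg (by linarith), ← Real.sqrt_eq_rpow, ← Real.sqrt_eq_rpow,
      Real.sqrt_div h0.le]
    have := Real.sqrt_pos.2 h0
    field_simp
  simp only [sub_self, sub_zero, intervalIntegral.integral_const, smul_eq_mul]
  have e2 : (-(1/2) + 1 : ℝ) = 1/2 := by norm_num
  rw [e2, Real.zero_rpow (by norm_num), sub_zero, e]
  nlinarith

lemma norm_ccos (x y r : ℝ) :
    ‖Complex.cos (((x:ℂ) + Complex.I * (y:ℝ)) * r)‖ ≤ Real.cosh (y * r) := by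
  rw [Complex.cos, Real.cosh_eq]
  rw [norm_div]
  simp only [Complex.norm_ofNat]
  apply div_le_div_of_nonneg_right _ (by norm_num)
  refine (norm_add_le _ _).trans ?_
  rw [Complex.norm_exp, Complex.norm_exp]
  simp
  linarith

lemma re_ccos (x y r : ℝ) :
    (Complex.cos (((x:ℂ) + Complex.I * (y:ℝ)) * r)).re = Real.cos (x * r) * Real.cosh (y * r) := by
  have : ((x:ℂ) + Complex.I * (y:ℝ)) * r = ((x * r : ℝ) : ℂ) + ((y * r : ℝ) : ℂ) * Complex.I := by
    push_cast; ring
  rw [this, Complex.cos_add_mul_I, ← Complex.ofReal_cos, ← Complex.ofReal_cosh,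
    ← Complex.ofReal_sin, ← Complex.ofReal_sinh]
  simp [-Complex.ofReal_cos, -Complex.ofReal_cosh, -Complex.ofReal_sin, -Complex.ofReal_sinh]

noncomputable def HH (m : ℕ) (z : ℂ) (s : ℝ) : ℂ :=
  ∫ r in (0:ℝ)..s, ((KK m s r : ℝ) : ℂ) * Complex.cos (z * r)

lemma HH_meas (m : ℕ) (z : ℂ) : Measurable (HH m z) := by
  apply meas_param
  have := KK_meas m
  apply Measurable.mul
  · exact Complex.measurable_ofReal.comp this
  · exact (by fun_prop : Measurable (fun q : ℝ × ℝ => Complex.cos (z * q.2)))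

lemma HH_int (m : ℕ) (hm : 1 ≤ m) (z : ℂ) {s : ℝ} (h0 : 0 < s) :
    IntervalIntegrable (fun r : ℝ => ((KK m s r : ℝ) : ℂ) * Complex.cos (z * r)) volume 0 s := by
  apply IntervalIntegrable.mul_continuousOn
  · have := KK_int m hm h0
    rw [intervalIntegrable_iff] at this ⊢
    exact this.ofReal
  · fun_prop

lemma KC_int (m : ℕ) (hm : 1 ≤ m) (y : ℝ) {s : ℝ} (h0 : 0 < s) :
    IntervalIntegrable (fun r : ℝ => KK m s r * Real.cosh (y * r)) volume 0 s :=
  (KK_int m hm h0).mul_continuousOn (by fun_prop)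

/-- real majorant -/
noncomputable def RR (m : ℕ) (y : ℝ) (s : ℝ) : ℝ :=
  ∫ r in (0:ℝ)..s, KK m s r * Real.cosh (y * r)

lemma HH_le (m : ℕ) (hm : 1 ≤ m) (x y : ℝ) {s : ℝ} (h0 : 0 < s) :
    ‖HH m ((x:ℂ) + Complex.I * (y:ℝ)) s‖ ≤ RR m y s := by
  apply intervalIntegral.norm_integral_le_of_norm_le h0.le _ (KC_int m hm y h0)
  refine Filter.Eventually.of_forall fun r hr => ?_
  rw [norm_mul, Complex.norm_real, Real.norm_of_nonneg (KK_nonneg m hr.1.le hr.2)]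
  exact mul_le_mul_of_nonneg_left (norm_ccos x y r) (KK_nonneg m hr.1.le hr.2)

lemma HH_re (m : ℕ) (hm : 1 ≤ m) (x y : ℝ) {s : ℝ} (h0 : 0 < s) :
    (HH m ((x:ℂ) + Complex.I * (y:ℝ)) s).re =
      ∫ r in (0:ℝ)..s, KK m s r * (Real.cos (x * r) * Real.cosh (y * r)) := by
  have := Complex.reCLM.intervalIntegral_comp_comm
    (HH_int m hm ((x:ℂ) + Complex.I * (y:ℝ)) h0)
  simp only [Complex.reCLM_apply] at this
  rw [HH, ← this]
  congr 1; ext r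
  rw [Complex.re_ofReal_mul, re_ccos]

lemma RR_le (m : ℕ) (hm : 1 ≤ m) (y : ℝ) {A s : ℝ} (h0 : 0 < s) (hA : s ≤ A) :
    RR m y s ≤ (Real.cosh A ^ ((m : ℝ)/2 - 1) * A + 2 * Real.sqrt 2) * Real.cosh (y * A) := by
  refine le_trans ?_ (mul_le_mul_of_nonneg_right (KK_int_le m hm h0 hA) (Real.cosh_pos _).le)
  rw [← intervalIntegral.integral_mul_const]
  apply intervalIntegral.integral_mono_on h0.le (KC_int m hm y h0)
    ((KK_int m hm h0).mul_const _)
  intro r hr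
  apply mul_le_mul_of_nonneg_left _ (KK_nonneg m hr.1 hr.2)
  rw [Real.cosh_le_cosh, abs_mul, abs_mul]
  apply mul_le_mul_of_nonneg_left _ (abs_nonneg _)
  rw [abs_of_nonneg hr.1, abs_of_pos (h0.trans_le hA)]
  exact hr.2.trans hA

lemma K2_int (m : ℕ) (hm : 1 ≤ m) {t : ℝ} (h0 : 0 < t) :
    IntervalIntegrable (fun s => KK m (2*t) (2*s)) volume 0 t := by
  have := (KK_int m hm (s := 2 * t) (by linarith)).comp_mul_left (c := 2)
  simpa using this

lemma outer_int (m₁ m₂ : ℕ) (hm₁ : 1 ≤ m₁) (hm₂ : 1 ≤ m₂) (x y : ℝ) {t : ℝ} (h0 : 0 < t) :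
    IntervalIntegrable (fun s : ℝ => ((KK m₂ (2*t) (2*s) : ℝ) : ℂ) *
      HH m₁ ((x:ℂ) + Complex.I * (y:ℝ)) s * ((Real.sinh s : ℝ) : ℂ)) volume 0 t := by
  apply IntervalIntegrable.mul_continuousOn _ (by fun_prop)
  have h1 := (K2_int m₂ hm₂ h0).mul_const
    ((Real.cosh t ^ ((m₁ : ℝ)/2 - 1) * t + 2 * Real.sqrt 2) * Real.cosh (y * t))
  refine h1.mono_fun' ?_ ?_
  · apply Measurable.aestronglyMeasurable
    apply Measurable.mul _ (HH_meas _ _)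
    unfold KK; fun_prop
  · rw [uIoc_of_le h0.le]
    filter_upwards [ae_restrict_mem measurableSet_Ioc] with s hs
    have := KK_nonneg m₂ (s := 2 * t) (r := 2 * s) (by linarith [hs.1]) (by linarith [hs.2])
    simp only [norm_mul, Complex.norm_real]
    rw [Real.norm_of_nonneg this]
    exact mul_le_mul_of_nonneg_left
      ((HH_le m₁ hm₁ x y hs.1).trans (RR_le m₁ hm₁ y hs.1 hs.2)) this

noncomputable def OO (m₁ m₂ : ℕ) (z : ℂ) (t : ℝ) : ℂ :=
  ∫ s in (0:ℝ)..t, ((KK m₂ (2*t) (2*s) : ℝ) : ℂ) * HH m₁ z s * ((Real.sinh s : ℝ) : ℂ)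

lemma OO_meas (m₁ m₂ : ℕ) (z : ℂ) : Measurable (OO m₁ m₂ z) := by
  apply meas_param
  apply Measurable.mul
  · apply Measurable.mul
    · exact Complex.measurable_ofReal.comp
        ((KK_meas m₂).comp (f := fun q : ℝ × ℝ => (2 * q.1, 2 * q.2)) (by fun_prop))
    · exact (HH_meas m₁ z).comp measurable_snd
  · exact (by fun_prop : Measurable (fun q : ℝ × ℝ => ((Real.sinh q.2 : ℝ) : ℂ)))

lemma OO_re (m₁ m₂ : ℕ) (hm₁ : 1 ≤ m₁) (hm₂ : 1 ≤ m₂) (x y : ℝ) {t : ℝ} (h0 : 0 < t) :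
    (OO m₁ m₂ ((x:ℂ) + Complex.I * (y:ℝ)) t).re = ∫ s in (0:ℝ)..t, KK m₂ (2*t) (2*s) *
      (∫ r in (0:ℝ)..s, KK m₁ s r * (Real.cos (x * r) * Real.cosh (y * r))) * Real.sinh s := by
  have := Complex.reCLM.intervalIntegral_comp_comm (outer_int m₁ m₂ hm₁ hm₂ x y h0)
  simp only [Complex.reCLM_apply] at this
  rw [OO, ← this]
  apply intervalIntegral.integral_congr_ae
  refine Filter.Eventually.of_forall fun s hs => ?_
  rw [uIoc_of_le h0.le] at hs
  rw [Complex.re_mul_ofReal, Complex.re_ofReal_mul, HH_re m₁ hm₁ x y hs.1]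

lemma OO_le (m₁ m₂ : ℕ) (hm₁ : 1 ≤ m₁) (hm₂ : 1 ≤ m₂) (x y : ℝ) {t : ℝ} (h0 : 0 < t) :
    ‖OO m₁ m₂ ((x:ℂ) + Complex.I * (y:ℝ)) t‖ ≤ (OO m₁ m₂ (Complex.I * (y:ℝ)) t).re := by
  have ez : Complex.I * (y:ℝ) = ((0:ℝ):ℂ) + Complex.I * (y:ℝ) := by simp
  rw [ez]
  have hr := Complex.reCLM.intervalIntegral_comp_comm (outer_int m₁ m₂ hm₁ hm₂ 0 y h0)
  simp only [Complex.reCLM_apply] at hr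
  conv_rhs => rw [OO, ← hr]
  apply intervalIntegral.norm_integral_le_of_norm_le h0.le
  · refine Filter.Eventually.of_forall fun s hs => ?_
    have h1 := KK_nonneg m₂ (s := 2 * t) (r := 2 * s) (by linarith [hs.1]) (by linarith [hs.2])
    have h2 : 0 ≤ Real.sinh s := Real.sinh_nonneg_iff.2 hs.1.le
    rw [Complex.re_mul_ofReal, Complex.re_ofReal_mul, HH_re m₁ hm₁ 0 y hs.1]
    simp only [norm_mul, Complex.norm_real]
    rw [Real.norm_of_nonneg h1, Real.norm_of_nonneg h2]
    apply mul_le_mul_of_nonneg_right _ h2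
    apply mul_le_mul_of_nonneg_left _ h1
    simpa [RR] using HH_le m₁ hm₁ x y hs.1
  · have := outer_int m₁ m₂ hm₁ hm₂ 0 y h0
    rw [intervalIntegrable_iff] at this ⊢
    exact this.re

lemma PhiC_eq (m₁ m₂ : ℕ) (z : ℂ) (t : ℝ) :
    PhiC m₁ m₂ z t = ((c₀ m₁ m₂ * Real.sinh (2*t) / Δ m₁ m₂ t : ℝ) : ℂ) * OO m₁ m₂ z t := rfl

lemma Δ_pos (m₁ m₂ : ℕ) {t : ℝ} (h : 0 < t) : 0 < Δ m₁ m₂ t := by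
  have := Real.sinh_pos_iff.2 h
  have := Real.cosh_pos t
  unfold Δ; positivity

lemma c₀_nonneg (m₁ m₂ : ℕ) : 0 ≤ c₀ m₁ m₂ := by
  unfold c₀
  have h1 : 0 ≤ Real.Gamma (((m₁ : ℝ) + m₂ + 1 - 1)/2) := by
    apply Real.Gamma_nonneg_of_nonneg
    have : (0:ℝ) ≤ (m₁:ℝ) + m₂ := by positivity
    linarith
  have h2 : 0 ≤ Real.Gamma (((m₁ : ℝ) + m₂ + 1)/2) :=
    Real.Gamma_nonneg_of_nonneg (by positivity)
  positivity

theorem stmt7 (m₁ m₂ : ℕ) (hm₁ : 1 ≤ m₁) (hm₂ : 1 ≤ m₂)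
    (p : ENNReal) (hp : 1 ≤ p) (α : ℝ) (hα : 0 < α)
    (f : ℝ → ℝ) (hf : Measurable f) (hf0 : ∀ t, 0 ≤ f t)
    (hsupp : ∀ t, t ∉ Ioc (0:ℝ) α → f t = 0)
    (hint : IntegrableOn
      (fun t => f t * (PhiC m₁ m₂ (Complex.I * (rhoP m₁ m₂ p : ℝ)) t).re * Δ m₁ m₂ t)
      (Ioc 0 α)) :
    ∀ lam : ℝ,
      ∫ t in Ioc (0:ℝ) α, f t * Psi m₁ m₂ p lam t * Δ m₁ m₂ t
        ≤ ‖∫ t in Ioc (0:ℝ) α,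
            (f t : ℂ) * PhiC m₁ m₂ ((lam : ℂ) + Complex.I * (rhoP m₁ m₂ p : ℝ)) t *
              (Δ m₁ m₂ t : ℝ)‖ := by
  intro lam
  have hΔ : Measurable (Δ m₁ m₂) := by unfold Δ; fun_prop
  have hI : IntegrableOn (fun t => (f t : ℂ) *
      PhiC m₁ m₂ ((lam : ℂ) + Complex.I * (rhoP m₁ m₂ p : ℝ)) t * (Δ m₁ m₂ t : ℝ))
      (Ioc 0 α) := by
    refine Integrable.mono' hint ?_ ?_
    · apply Measurable.aestronglyMeasurable
      simp only [PhiC_eq]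
      have := OO_meas m₁ m₂ ((lam : ℂ) + Complex.I * (rhoP m₁ m₂ p : ℝ))
      fun_prop
    · filter_upwards [ae_restrict_mem measurableSet_Ioc] with t ht
      have hd := Δ_pos m₁ m₂ ht.1
      have hc : 0 ≤ c₀ m₁ m₂ * Real.sinh (2*t) / Δ m₁ m₂ t :=
        div_nonneg (mul_nonneg (c₀_nonneg _ _)
          (Real.sinh_nonneg_iff.2 (by linarith [ht.1]))) hd.le
      rw [PhiC_eq, PhiC_eq, Complex.re_ofReal_mul, norm_mul, norm_mul, norm_mul,
        Complex.norm_real, Complex.norm_real, Complex.norm_real,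
        Real.norm_of_nonneg (hf0 t), Real.norm_of_nonneg hd.le, Real.norm_of_nonneg hc]
      apply mul_le_mul_of_nonneg_right _ hd.le
      apply mul_le_mul_of_nonneg_left _ (hf0 t)
      exact mul_le_mul_of_nonneg_left (OO_le m₁ m₂ hm₁ hm₂ lam _ ht.1) hc
  have hr := Complex.reCLM.integral_comp_comm hI
  simp only [Complex.reCLM_apply] at hr
  refine le_trans (le_of_eq ?_) (Complex.re_le_norm _)
  rw [← hr]
  apply setIntegral_congr_fun measurableSet_Ioc
  intro t ht
  simp only
  rw [Complex.re_mul_ofReal, Complex.re_ofReal_mul, PhiC_eq, Complex.re_ofReal_mul,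
    OO_re m₁ m₂ hm₁ hm₂ lam _ ht.1]
  rfl
end

section
/- Let m₁, m₂ ≥ 1 be integers, q₀ ∈ [1, ∞], and 1 < p, q < ∞ with p' = p/(p−1). Let u : ℝ → [0,∞) and v : (0,∞) → (0,∞) be measurable with u^q locally integrable with respect to |c(λ)|^{−2} dλ and v^{−p'} locally integrable with respect to Δ(t) dt on [0,∞). Suppose there is a constant C > 0 such that for every measurable f : (0,∞) → [0,∞) vanishing outside a bounded set, with ∫₀^{∞} (v(t) f(t))^p Δ(t) dt < ∞ and with t ↦ f(t) Φ(iρ_{q₀}, t) Δ(t) integrable, one has ( ∫_{ℝ} u(λ)^q | ∫₀^{∞} f(t) Φ(λ + iρ_{q₀}, t) Δ(t) dt |^q |c(λ)|^{−2} dλ )^{1/q} ≤ C ( ∫₀^{∞} (v(t) f(t))^p Δ(t) dt )^{1/p}. Then for every κ ∈ ℝ and every fixed θ₀ with 0 < θ₀ < π/2, sup_{s>0} ( ∫₀^{θ₀/s} u(λ)^q |c(λ)|^{−2} dλ )^{1/q} · ( ∫₀^{s} v(t)^{−p'} Φ(iρ_{q₀}, t)^{κ p} Δ(t) dt )^{−1/p}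 · ( ∫₀^{s} v(t)^{−p'} Φ(iρ_{q₀}, t)^{κ+1} Δ(t) dt ) < ∞. -/
open Set intervalIntegral MeasureTheory ENNReal

/-- The Harish-Chandra `c`-function. -/
noncomputable def cHC (m₁ m₂ : ℕ) (lam : ℝ) : ℂ :=
  (2 : ℂ) ^ ((ρ₀ m₁ m₂ : ℂ) - Complex.I * lam) *
      Complex.Gamma (((m₁ : ℂ) + m₂ + 1) / 2) * Complex.Gamma (Complex.I * lam) /
    (Complex.Gamma (((ρ₀ m₁ m₂ : ℂ) + Complex.I * lam) / 2) *
      Complex.Gamma (((m₁ : ℂ) + 2) / 4 + Complex.I * lam / 2))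

/-- The Plancherel density `|c(λ)|⁻²`. -/
noncomputable def densHC (m₁ m₂ : ℕ) (lam : ℝ) : ℝ := ‖cHC m₁ m₂ lam‖ ^ (-2 : ℤ)

theorem aux_key {α : Type*} [MeasurableSpace α] (μ : Measure α) (g : α → ℂ) (h : α → ℝ) (c : ℝ)
    (hc : 0 < c) (hg : AEStronglyMeasurable g μ) (hh : AEStronglyMeasurable h μ)
    (h1 : ∀ᵐ x ∂μ, c * h x ≤ (g x).re) (h2 : ∀ᵐ x ∂μ, ‖g x‖ ≤ h x) :
    c * ∫ x, h x ∂μ ≤ (∫ x, g x ∂μ).re ∧ ‖∫ x, g x ∂μ‖ ≤ ∫ x, h x ∂μ := by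
  by_cases hi : Integrable h μ
  · have gi : Integrable g μ := hi.mono' hg h2
    refine ⟨?_, norm_integral_le_of_norm_le hi h2⟩
    have e : (∫ x, g x ∂μ).re = ∫ x, (g x).re ∂μ := (integral_re gi).symm
    rw [e, ← MeasureTheory.integral_const_mul]
    exact integral_mono_ae (hi.const_mul c) gi.re h1
  · have gi : ¬ Integrable g μ := by
      intro gi
      apply hi
      refine (gi.norm.const_mul c⁻¹).mono' hh ?_
      filter_upwards [h1, h2] with x a b
      have h0 : 0 ≤ h x := (norm_nonneg _).trans b
      rw [Real.norm_of_nonneg h0, ← div_eq_inv_mul, le_div_iff₀ hc, mul_comm]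
      exact a.trans ((le_abs_self _).trans (Complex.abs_re_le_norm _))
    rw [integral_undef hi, integral_undef gi]
    simp

theorem aux_meas {E : Type*} [NormedAddCommGroup E] [NormedSpace ℝ E]
    (F : ℝ → ℝ → E) (hF : StronglyMeasurable (Function.uncurry F)) :
    StronglyMeasurable (fun s : ℝ => ∫ r in (0:ℝ)..s, F s r) := by
  have key : ∀ A : Set (ℝ × ℝ), MeasurableSet A →
      StronglyMeasurable (fun s : ℝ => ∫ r in {r | (s, r) ∈ A}, F s r) := by
    intro A hA
    have : (fun s : ℝ => ∫ r in {r | (s, r) ∈ A}, F s r)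
        = fun s => ∫ r, (A.indicator (Function.uncurry F)) (s, r) := by
      funext s
      rw [← MeasureTheory.integral_indicator (s := {r | (s, r) ∈ A}) (measurable_prodMk_left hA)]
      rfl
    rw [this]
    exact (hF.indicator hA).integral_prod_right'
  have h1 := key {x | 0 < x.2 ∧ x.2 ≤ x.1}
    ((measurableSet_lt measurable_const measurable_snd).inter
      (measurableSet_le measurable_snd measurable_fst))
  have h2 := key {x | x.1 < x.2 ∧ x.2 ≤ 0}
    ((measurableSet_lt measurable_fst measurable_snd).inter
      (measurableSet_le measurable_snd measurable_const))
  exact h1.sub h2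

noncomputable def auxI (m₁ : ℕ) (z : ℂ) (s : ℝ) : ℂ :=
  ∫ r in (0:ℝ)..s,
        (((Real.cosh s - Real.cosh r) ^ ((m₁ : ℝ)/2 - 1) : ℝ) : ℂ) * Complex.cos (z * r)

noncomputable def auxIR (m₁ : ℕ) (η : ℝ) (s : ℝ) : ℝ :=
  ∫ r in (0:ℝ)..s, (Real.cosh s - Real.cosh r) ^ ((m₁ : ℝ)/2 - 1) * Real.cosh (η * r)

noncomputable def auxJ (m₁ m₂ : ℕ) (z : ℂ) (t : ℝ) : ℂ :=
  ∫ s in (0:ℝ)..t,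
      (((Real.cosh (2*t) - Real.cosh (2*s)) ^ ((m₂ : ℝ)/2 - 1) : ℝ) : ℂ) *
      auxI m₁ z s * ((Real.sinh s : ℝ) : ℂ)

noncomputable def auxJR (m₁ m₂ : ℕ) (η : ℝ) (t : ℝ) : ℝ :=
  ∫ s in (0:ℝ)..t,
      (Real.cosh (2*t) - Real.cosh (2*s)) ^ ((m₂ : ℝ)/2 - 1) * auxIR m₁ η s * Real.sinh s

theorem aux_cos_eq (η r : ℝ) : Complex.cos (Complex.I * (η:ℝ) * r) = (Real.cosh (η * r) : ℂ) := by
  rw [Complex.ofReal_cosh, ← Complex.cos_mul_I]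
  congr 1; push_cast; ring

theorem auxI_eq (m₁ : ℕ) (η s : ℝ) : auxI m₁ (Complex.I * (η:ℝ)) s = (auxIR m₁ η s : ℂ) := by
  unfold auxI auxIR
  rw [← intervalIntegral.integral_ofReal]
  congr 1; funext r
  rw [aux_cos_eq]; push_cast; rfl

theorem auxJ_eq (m₁ m₂ : ℕ) (η s : ℝ) :
    auxJ m₁ m₂ (Complex.I * (η:ℝ)) s = (auxJR m₁ m₂ η s : ℂ) := by
  unfold auxJ auxJR
  rw [← intervalIntegral.integral_ofReal]
  congr 1; funext r
  rw [auxI_eq]; push_cast; rfl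

theorem auxI_meas (m₁ : ℕ) (z : ℂ) : StronglyMeasurable (auxI m₁ z) := by
  unfold auxI
  apply aux_meas (fun s r => (((Real.cosh s - Real.cosh r) ^ ((m₁ : ℝ)/2 - 1) : ℝ) : ℂ) *
    Complex.cos (z * r))
  apply Measurable.stronglyMeasurable
  unfold Function.uncurry
  fun_prop

theorem auxIR_meas (m₁ : ℕ) (η : ℝ) : StronglyMeasurable (auxIR m₁ η) := by
  unfold auxIR
  apply aux_meas (fun s r => (Real.cosh s - Real.cosh r) ^ ((m₁ : ℝ)/2 - 1) * Real.cosh (η * r))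
  apply Measurable.stronglyMeasurable
  unfold Function.uncurry
  fun_prop

theorem auxJ_meas (m₁ m₂ : ℕ) (z : ℂ) : StronglyMeasurable (auxJ m₁ m₂ z) := by
  unfold auxJ
  apply aux_meas (fun t s => (((Real.cosh (2*t) - Real.cosh (2*s)) ^ ((m₂ : ℝ)/2 - 1) : ℝ) : ℂ) *
      auxI m₁ z s * ((Real.sinh s : ℝ) : ℂ))
  apply Measurable.stronglyMeasurable
  unfold Function.uncurry
  have := (auxI_meas m₁ z).measurable
  fun_prop

theorem auxJR_meas (m₁ m₂ : ℕ) (η : ℝ) : StronglyMeasurable (auxJR m₁ m₂ η) := by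
  unfold auxJR
  apply aux_meas (fun t s => (Real.cosh (2*t) - Real.cosh (2*s)) ^ ((m₂ : ℝ)/2 - 1) *
    auxIR m₁ η s * Real.sinh s)
  apply Measurable.stronglyMeasurable
  unfold Function.uncurry
  have := (auxIR_meas m₁ η).measurable
  fun_prop

theorem aux_cos (lam η r c : ℝ) (hcos : c ≤ Real.cos (lam * r)) :
    c * Real.cosh (η * r) ≤ (Complex.cos (((lam:ℂ) + Complex.I * (η:ℝ)) * r)).re ∧
    ‖Complex.cos (((lam:ℂ) + Complex.I * (η:ℝ)) * r)‖ ≤ Real.cosh (η * r) := by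
  have e : ((lam:ℂ) + Complex.I * (η:ℝ)) * r = ((lam * r : ℝ) : ℂ) + ((η * r : ℝ) : ℂ) * Complex.I := by
    push_cast; ring
  have hch : 0 < Real.cosh (η * r) := Real.cosh_pos _
  rw [e, Complex.cos_add_mul_I, ← Complex.ofReal_cos, ← Complex.ofReal_sin, ← Complex.ofReal_cosh,
    ← Complex.ofReal_sinh]
  generalize hx : lam * r = x at *
  generalize hy : η * r = y at *
  have e2 : ((Real.cos x : ℂ) * (Real.cosh y : ℂ) - (Real.sin x : ℂ) * (Real.sinh y : ℂ) * Complex.I)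
    = ⟨Real.cos x * Real.cosh y, - (Real.sin x * Real.sinh y)⟩ := by
    apply Complex.ext <;>
      simp [-Complex.ofReal_cos, -Complex.ofReal_sin, -Complex.ofReal_cosh, -Complex.ofReal_sinh]
  rw [e2]
  refine ⟨mul_le_mul_of_nonneg_right hcos hch.le, ?_⟩
  rw [Complex.norm_eq_sqrt_sq_add_sq]
  apply Real.sqrt_le_iff.2 ⟨hch.le, ?_⟩
  have a := Real.sin_sq_add_cos_sq x
  have b := Real.cosh_sq y
  simp only
  have : Real.sin x ^ 2 * Real.sinh y ^ 2 ≤ Real.sin x ^ 2 * Real.cosh y ^ 2 := by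
    apply mul_le_mul_of_nonneg_left _ (sq_nonneg _); linarith
  calc _ = Real.cos x ^ 2 * Real.cosh y ^ 2 + Real.sin x ^ 2 * Real.sinh y ^ 2 := by ring
    _ ≤ Real.cos x ^ 2 * Real.cosh y ^ 2 + Real.sin x ^ 2 * Real.cosh y ^ 2 := by linarith
    _ = (Real.sin x ^ 2 + Real.cos x ^ 2) * Real.cosh y ^ 2 := by ring
    _ = _ := by rw [a, one_mul]

theorem auxI_bd (m₁ : ℕ) (lam η s c : ℝ) (hc : 0 < c) (hs : 0 < s)
    (hcos : ∀ r, 0 < r → r ≤ s → c ≤ Real.cos (lam * r)) :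
    c * auxIR m₁ η s ≤ (auxI m₁ ((lam:ℂ) + Complex.I * (η:ℝ)) s).re ∧
    ‖auxI m₁ ((lam:ℂ) + Complex.I * (η:ℝ)) s‖ ≤ auxIR m₁ η s := by
  unfold auxI auxIR
  rw [intervalIntegral.integral_of_le hs.le, intervalIntegral.integral_of_le hs.le]
  have hk : ∀ r, 0 < r → r ≤ s → 0 ≤ (Real.cosh s - Real.cosh r) ^ ((m₁ : ℝ)/2 - 1) := by
    intro r h0 hr
    apply Real.rpow_nonneg
    rw [sub_nonneg, Real.cosh_le_cosh, abs_of_pos h0, abs_of_pos hs]; exact hr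
  apply aux_key _ _ _ _ hc
  · apply Measurable.aestronglyMeasurable; fun_prop
  · apply Measurable.aestronglyMeasurable; fun_prop
  · refine (ae_restrict_iff' measurableSet_Ioc).2 (Filter.Eventually.of_forall fun r hr => ?_)
    rw [Complex.re_ofReal_mul, mul_left_comm]
    exact mul_le_mul_of_nonneg_left (aux_cos lam η r c (hcos r hr.1 hr.2)).1 (hk r hr.1 hr.2)
  · refine (ae_restrict_iff' measurableSet_Ioc).2 (Filter.Eventually.of_forall fun r hr => ?_)
    rw [norm_mul, Complex.norm_of_nonneg (hk r hr.1 hr.2)]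
    exact mul_le_mul_of_nonneg_left (aux_cos lam η r c (hcos r hr.1 hr.2)).2 (hk r hr.1 hr.2)

theorem auxJ_bd (m₁ m₂ : ℕ) (lam η t c : ℝ) (hc : 0 < c) (ht : 0 < t)
    (hcos : ∀ r, 0 < r → r ≤ t → c ≤ Real.cos (lam * r)) :
    c * auxJR m₁ m₂ η t ≤ (auxJ m₁ m₂ ((lam:ℂ) + Complex.I * (η:ℝ)) t).re ∧
    ‖auxJ m₁ m₂ ((lam:ℂ) + Complex.I * (η:ℝ)) t‖ ≤ auxJR m₁ m₂ η t := by
  unfold auxJ auxJR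
  rw [intervalIntegral.integral_of_le ht.le, intervalIntegral.integral_of_le ht.le]
  have hk : ∀ r, 0 < r → r ≤ t → 0 ≤ (Real.cosh (2*t) - Real.cosh (2*r)) ^ ((m₂ : ℝ)/2 - 1) := by
    intro r h0 hr
    apply Real.rpow_nonneg
    rw [sub_nonneg, Real.cosh_le_cosh, abs_of_pos (by linarith), abs_of_pos (by linarith)]
    linarith
  have hsh : ∀ r, 0 < r → 0 ≤ Real.sinh r := fun r hr => Real.sinh_nonneg_iff.2 hr.le
  have hI : ∀ r, 0 < r → r ≤ t → _ := fun r h0 hr =>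
    auxI_bd m₁ lam η r c hc h0 (fun x hx hxr => hcos x hx (hxr.trans hr))
  have m1 := (auxI_meas m₁ ((lam:ℂ) + Complex.I * (η:ℝ))).measurable
  have m2 := (auxIR_meas m₁ η).measurable
  apply aux_key _ _ _ _ hc
  · apply Measurable.aestronglyMeasurable; fun_prop
  · apply Measurable.aestronglyMeasurable; fun_prop
  · refine (ae_restrict_iff' measurableSet_Ioc).2 (Filter.Eventually.of_forall fun r hr => ?_)
    rw [Complex.re_mul_ofReal, Complex.re_ofReal_mul, ← mul_assoc, mul_left_comm]
    exact mul_le_mul_of_nonneg_right (mul_le_mul_of_nonneg_left (hI r hr.1 hr.2).1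
      (hk r hr.1 hr.2)) (hsh r hr.1)
  · refine (ae_restrict_iff' measurableSet_Ioc).2 (Filter.Eventually.of_forall fun r hr => ?_)
    rw [norm_mul, norm_mul, Complex.norm_of_nonneg (hk r hr.1 hr.2),
      Complex.norm_of_nonneg (hsh r hr.1)]
    exact mul_le_mul_of_nonneg_right (mul_le_mul_of_nonneg_left (hI r hr.1 hr.2).2
      (hk r hr.1 hr.2)) (hsh r hr.1)

theorem auxΔ_meas (m₁ m₂ : ℕ) : Measurable (Δ m₁ m₂) := by
  unfold Δ; fun_prop

theorem auxΔ_pos (m₁ m₂ : ℕ) (t : ℝ) (ht : 0 < t) : 0 < Δ m₁ m₂ t := by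
  have := Real.sinh_pos_iff.2 ht
  have := Real.cosh_pos t
  unfold Δ; positivity

theorem auxPhi_eq (m₁ m₂ : ℕ) (z : ℂ) (t : ℝ) : PhiC m₁ m₂ z t =
    ((c₀ m₁ m₂ * Real.sinh (2*t) / Δ m₁ m₂ t : ℝ) : ℂ) * auxJ m₁ m₂ z t := rfl

theorem auxPhi_meas (m₁ m₂ : ℕ) (z : ℂ) : Measurable (PhiC m₁ m₂ z) := by
  have h := (auxJ_meas m₁ m₂ z).measurable
  have h2 := auxΔ_meas m₁ m₂
  have : PhiC m₁ m₂ z = fun t => ((c₀ m₁ m₂ * Real.sinh (2*t) / Δ m₁ m₂ t : ℝ) : ℂ) *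
    auxJ m₁ m₂ z t := rfl
  rw [this]
  fun_prop

theorem auxPhi_bd (m₁ m₂ : ℕ) (hm₁ : 1 ≤ m₁) (lam η t c : ℝ) (hc : 0 < c) (ht : 0 < t)
    (hcos : ∀ r, 0 < r → r ≤ t → c ≤ Real.cos (lam * r)) :
    c * (PhiC m₁ m₂ (Complex.I * (η:ℝ)) t).re
      ≤ (PhiC m₁ m₂ ((lam:ℂ) + Complex.I * (η:ℝ)) t).re ∧
    ‖PhiC m₁ m₂ ((lam:ℂ) + Complex.I * (η:ℝ)) t‖ ≤ (PhiC m₁ m₂ (Complex.I * (η:ℝ)) t).re := by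
  have hk : 0 ≤ c₀ m₁ m₂ * Real.sinh (2*t) / Δ m₁ m₂ t := by
    have h1 := auxΔ_pos m₁ m₂ t ht
    have h2 : 0 < Real.sinh (2*t) := Real.sinh_pos_iff.2 (by linarith)
    have h0 : (1:ℝ) ≤ m₁ := by exact_mod_cast hm₁
    have h3 : 0 < Real.Gamma (((m₁ : ℝ) + m₂ + 1 - 1)/2) := by
      apply Real.Gamma_pos_of_pos
      have : (0:ℝ) ≤ m₂ := by positivity
      linarith
    have h4 : 0 < Real.Gamma (((m₁ : ℝ) + m₂ + 1)/2) := by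
      apply Real.Gamma_pos_of_pos; positivity
    unfold c₀
    positivity
  have hJ := auxJ_bd m₁ m₂ lam η t c hc ht hcos
  simp only [auxPhi_eq, auxJ_eq]
  rw [Complex.re_ofReal_mul, Complex.re_ofReal_mul, norm_mul, Complex.norm_of_nonneg hk,
    Complex.ofReal_re, mul_left_comm]
  exact ⟨mul_le_mul_of_nonneg_left hJ.1 hk, mul_le_mul_of_nonneg_left hJ.2 hk⟩

theorem auxPhi_nonneg (m₁ m₂ : ℕ) (hm₁ : 1 ≤ m₁) (η t : ℝ) (ht : 0 < t) :
    0 ≤ (PhiC m₁ m₂ (Complex.I * (η:ℝ)) t).re :=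
  (norm_nonneg _).trans (auxPhi_bd m₁ m₂ hm₁ 0 η t 1 one_pos ht (by simp)).2

/-- general necessary condition for Pitt's inequality, radial form. -/
theorem stmt8 (m₁ m₂ : ℕ) (hm₁ : 1 ≤ m₁) (hm₂ : 1 ≤ m₂)
    (q₀ : ENNReal) (hq₀ : 1 ≤ q₀)
    (p q p' : ℝ) (hp : 1 < p) (hq : 1 < q) (hp'def : p' = p / (p - 1))
    (u : ℝ → ℝ) (v : ℝ → ℝ) (hu : Measurable u) (hv : Measurable v)
    (hu0 : ∀ lam, 0 ≤ u lam) (hv0 : ∀ t ∈ Ioi (0:ℝ), 0 < v t)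
    (huloc : ∀ R : ℝ, 0 < R →
      (∫⁻ lam in Icc (-R) R,
        ENNReal.ofReal (u lam) ^ q * ENNReal.ofReal (densHC m₁ m₂ lam)) < ⊤)
    (hvloc : ∀ R : ℝ, 0 < R →
      (∫⁻ t in Ioc (0:ℝ) R,
        ENNReal.ofReal (v t) ^ (-p') * ENNReal.ofReal (Δ m₁ m₂ t)) < ⊤)
    (C : ℝ) (hC : 0 < C)
    (hPitt : ∀ f : ℝ → ℝ, Measurable f → (∀ t, 0 ≤ f t) →
      (∃ R : ℝ, ∀ t, R ≤ t → f t = 0) →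
      (∫⁻ t in Ioi (0:ℝ),
          ENNReal.ofReal (v t * f t) ^ p * ENNReal.ofReal (Δ m₁ m₂ t)) < ⊤ →
      Integrable
        (fun t => f t * (PhiC m₁ m₂ (Complex.I * (rhoP m₁ m₂ q₀ : ℝ)) t).re * Δ m₁ m₂ t)
        (volume.restrict (Ioi 0)) →
      (∫⁻ lam : ℝ,
          ENNReal.ofReal (u lam) ^ q *
            (‖∫ t in Ioi (0:ℝ),
                (f t : ℂ) * PhiC m₁ m₂ ((lam : ℂ) + Complex.I * (rhoP m₁ m₂ q₀ : ℝ)) t *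
                  (Δ m₁ m₂ t : ℝ)‖₊ : ℝ≥0∞) ^ q *
            ENNReal.ofReal (densHC m₁ m₂ lam)) ^ (1/q)
        ≤ ENNReal.ofReal C *
          (∫⁻ t in Ioi (0:ℝ),
            ENNReal.ofReal (v t * f t) ^ p * ENNReal.ofReal (Δ m₁ m₂ t)) ^ (1/p)) :
    ∀ κ : ℝ, ∀ θ₀ : ℝ, 0 < θ₀ → θ₀ < Real.pi / 2 →
      ∃ M : ℝ, ∀ s : ℝ, 0 < s →
        (∫⁻ lam in Ioo (0:ℝ) (θ₀/s),
            ENNReal.ofReal (u lam) ^ q * ENNReal.ofReal (densHC m₁ m₂ lam)) ^ (1/q) *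
        (∫⁻ t in Ioo (0:ℝ) s,
            ENNReal.ofReal (v t) ^ (-p') *
              ENNReal.ofReal ((PhiC m₁ m₂ (Complex.I * (rhoP m₁ m₂ q₀ : ℝ)) t).re) ^ (κ * p) *
              ENNReal.ofReal (Δ m₁ m₂ t)) ^ (-(1/p)) *
        (∫⁻ t in Ioo (0:ℝ) s,
            ENNReal.ofReal (v t) ^ (-p') *
              ENNReal.ofReal ((PhiC m₁ m₂ (Complex.I * (rhoP m₁ m₂ q₀ : ℝ)) t).re) ^ (κ + 1) *
              ENNReal.ofReal (Δ m₁ m₂ t))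
          ≤ ENNReal.ofReal M := by
  intro κ θ₀ hθ hθ2
  have hcθ : 0 < Real.cos θ₀ := Real.cos_pos_of_mem_Ioo ⟨by linarith, hθ2⟩
  refine ⟨C / Real.cos θ₀, fun s hs => ?_⟩
  set η := rhoP m₁ m₂ q₀ with hη
  set P : ℝ → ℝ := fun t => (PhiC m₁ m₂ (Complex.I * (η : ℝ)) t).re with hP
  have hPm : Measurable P := Complex.measurable_re.comp (auxPhi_meas m₁ m₂ _)
  have hΔm := auxΔ_meas m₁ m₂
  have hPn : ∀ t, 0 < t → 0 ≤ P t := fun t ht => auxPhi_nonneg m₁ m₂ hm₁ η t ht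
  have hppos : 0 < p := by linarith
  set X := (∫⁻ lam in Ioo (0:ℝ) (θ₀/s),
            ENNReal.ofReal (u lam) ^ q * ENNReal.ofReal (densHC m₁ m₂ lam)) ^ (1/q) with hX
  set aF : ℝ → ℝ≥0∞ := fun t => ENNReal.ofReal (v t) ^ (-p') *
              ENNReal.ofReal (P t) ^ (κ * p) * ENNReal.ofReal (Δ m₁ m₂ t) with haF
  set dF : ℝ → ℝ≥0∞ := fun t => ENNReal.ofReal (v t) ^ (-p') *
              ENNReal.ofReal (P t) ^ (κ + 1) * ENNReal.ofReal (Δ m₁ m₂ t) with hdF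
  have haFm : Measurable aF := by fun_prop
  have hdFm : Measurable dF := by fun_prop
  set A := ∫⁻ t in Ioo (0:ℝ) s, aF t with hA
  set D := ∫⁻ t in Ioo (0:ℝ) s, dF t with hD
  change X * A ^ (-(1/p)) * D ≤ _
  by_cases hAtop : A = ⊤
  · rw [hAtop, ENNReal.top_rpow_of_neg (by simp; exact hppos)]; simp
  set K := ENNReal.ofReal (C / Real.cos θ₀) with hK
  suffices hmain : X * D ≤ K * A ^ (1/p) by
    rw [ENNReal.rpow_neg]
    have hBtop : A ^ (1/p) ≠ ⊤ := ENNReal.rpow_ne_top_of_nonneg (by positivity) hAtop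
    generalize A ^ (1/p) = B at *
    by_cases hB : B = 0
    · rw [hB, mul_zero] at hmain
      rcases mul_eq_zero.1 (le_antisymm hmain bot_le) with h | h
      · rw [h]; simp
      · rw [h]; simp
    · calc X * B⁻¹ * D = (X * D) / B := by rw [div_eq_mul_inv]; ring
        _ ≤ K := ENNReal.div_le_of_le_mul hmain
  set E : ℕ → Set ℝ := fun N => {t | (0 < t ∧ t < s) ∧ 0 < P t ∧
    P t ^ (κ * p) ≤ N ∧ P t ^ (κ + 1) ≤ N} with hE
  have hEm : ∀ N, MeasurableSet (E N) := by
    intro N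
    have h1 : Measurable fun t => P t ^ (κ * p) := by fun_prop
    have h2 : Measurable fun t => P t ^ (κ + 1) := by fun_prop
    exact (measurableSet_Ioo (a := (0:ℝ)) (b := s)).inter
      ((measurableSet_lt measurable_const hPm).inter ((measurableSet_le h1
        (measurable_const (a := (N:ℝ)))).inter (measurableSet_le h2 (measurable_const (a := (N:ℝ))))))
  have hEs : ∀ N, E N ⊆ Ioo 0 s := fun N t ht => ht.1
  have hEmono : Monotone E := by
    intro a b hab t ht
    have : (a:ℝ) ≤ b := by exact_mod_cast hab
    exact ⟨ht.1, ht.2.1, ht.2.2.1.trans this, ht.2.2.2.trans this⟩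
  have hEU : ∀ t, 0 < t → t < s → 0 < P t → t ∈ ⋃ N, E N := by
    intro t h0 h1 h2
    obtain ⟨N, hN⟩ := exists_nat_ge (max (P t ^ (κ * p)) (P t ^ (κ + 1)))
    exact mem_iUnion.2 ⟨N, ⟨h0, h1⟩, h2, (le_max_left _ _).trans hN, (le_max_right _ _).trans hN⟩
  have hDU : D ≤ ⨆ N, ∫⁻ t in E N, dF t := by
    rw [← setLIntegral_iUnion_of_directed _ hEmono.directed_le,
      ← lintegral_indicator (MeasurableSet.iUnion hEm), hD, ← lintegral_indicator measurableSet_Ioo]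
    have hfin : ∀ᵐ t ∂(volume.restrict (Ioo (0:ℝ) s)), aF t < ⊤ := ae_lt_top haFm hAtop
    rw [ae_restrict_iff' measurableSet_Ioo] at hfin
    apply lintegral_mono_ae
    filter_upwards [hfin] with t ht
    by_cases hts : t ∈ Ioo 0 s
    · rw [indicator_of_mem hts]
      rcases (hPn t hts.1).lt_or_eq with h | h
      · rw [indicator_of_mem (hEU t hts.1 hts.2 h)]
      · have hz : dF t = 0 := by
          by_cases hk : 0 < κ + 1
          · simp only [hdF, ← h, ENNReal.ofReal_zero, ENNReal.zero_rpow_of_pos hk]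
            simp
          · exfalso
            have hkp : κ * p < 0 := mul_neg_of_neg_of_pos (by linarith) hppos
            have := ht hts
            simp only [haF, ← h, ENNReal.ofReal_zero, ENNReal.zero_rpow_of_neg hkp] at this
            have e1 : ENNReal.ofReal (v t) ^ (-p') ≠ 0 := by
              rw [ENNReal.ofReal_rpow_of_pos (hv0 t hts.1)]
              exact (ENNReal.ofReal_pos.2 (Real.rpow_pos_of_pos (hv0 t hts.1) _)).ne'
            have e2 : ENNReal.ofReal (Δ m₁ m₂ t) ≠ 0 :=
              (ENNReal.ofReal_pos.2 (auxΔ_pos m₁ m₂ t hts.1)).ne'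
            rw [ENNReal.mul_top e1, ENNReal.top_mul e2] at this
            exact lt_irrefl _ this
        rw [hz]; exact bot_le
    · rw [indicator_of_notMem hts]; exact bot_le
  refine (mul_le_mul_right hDU X).trans ?_
  rw [ENNReal.mul_iSup]
  refine iSup_le fun N => ?_
  have hAN : ∫⁻ t in E N, aF t ≤ A := lintegral_mono_set (hEs N)
  refine le_trans ?_ (mul_le_mul_right (ENNReal.rpow_le_rpow hAN (by positivity)) K)
  set DN := ∫⁻ t in E N, dF t with hDN
  -- the test function
  set f : ℝ → ℝ := (E N).indicator (fun t => v t ^ (-p') * P t ^ κ) with hf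
  have hfm : Measurable f := Measurable.indicator (by fun_prop) (hEm N)
  have hf0 : ∀ t, 0 ≤ f t := by
    intro t
    apply indicator_nonneg
    intro x hx
    have := hv0 x hx.1.1
    have := hx.2.1
    positivity
  have hfs : ∀ t, t ∉ E N → f t = 0 := fun t ht => indicator_of_notMem ht _
  have hEI : E N ∩ Ioi 0 = E N := inter_eq_left.2 fun t ht => ht.1.1
  have hpp : (1 + -p') * p = -p' := by
    rw [hp'def]; have : p - 1 ≠ 0 := by linarith
    field_simp; ring
  have hAe : ∫⁻ t in Ioi (0:ℝ),
          ENNReal.ofReal (v t * f t) ^ p * ENNReal.ofReal (Δ m₁ m₂ t) = ∫⁻ t in E N, aF t := by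
    have : (fun t => ENNReal.ofReal (v t * f t) ^ p * ENNReal.ofReal (Δ m₁ m₂ t))
        = (E N).indicator aF := by
      funext t
      by_cases ht : t ∈ E N
      · have hv1 := hv0 t ht.1.1
        have hP1 := ht.2.1
        rw [indicator_of_mem ht, hf, indicator_of_mem ht]
        simp only [haF]
        congr 1
        rw [ENNReal.ofReal_rpow_of_pos (by positivity), ENNReal.ofReal_rpow_of_pos hv1,
          ENNReal.ofReal_rpow_of_pos hP1, ← ENNReal.ofReal_mul (by positivity)]
        congr 1
        rw [← mul_assoc, Real.mul_rpow (by positivity) (by positivity), ← Real.rpow_mul hP1.le]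
        congr 1
        rw [← Real.rpow_one_add' hv1.le, ← Real.rpow_mul hv1.le, hpp]
        intro h0
        rw [h0, zero_mul] at hpp
        linarith
      · rw [indicator_of_notMem ht, hfs t ht]
        simp [ENNReal.zero_rpow_of_pos hppos]
    rw [this, setLIntegral_indicator (hEm N), hEI]
  have hvE : ∫⁻ t in E N, ENNReal.ofReal (v t) ^ (-p') * ENNReal.ofReal (Δ m₁ m₂ t) < ⊤ :=
    lt_of_le_of_lt (lintegral_mono_set (t := Ioc 0 s) fun t ht => ⟨ht.1.1, ht.1.2.le⟩) (hvloc s hs)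
  have hbd : ∀ a : ℝ, (∀ t ∈ E N, P t ^ a ≤ N) → ∫⁻ t in E N, ENNReal.ofReal (v t) ^ (-p') *
              ENNReal.ofReal (P t) ^ a * ENNReal.ofReal (Δ m₁ m₂ t) < ⊤ := by
    intro a ha
    have : ∫⁻ t in E N, ENNReal.ofReal (v t) ^ (-p') *
              ENNReal.ofReal (P t) ^ a * ENNReal.ofReal (Δ m₁ m₂ t) ≤
        ∫⁻ t in E N, ENNReal.ofReal N * (ENNReal.ofReal (v t) ^ (-p') *
          ENNReal.ofReal (Δ m₁ m₂ t)) := by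
      apply setLIntegral_mono' (hEm N)
      intro t ht
      have : ENNReal.ofReal (P t) ^ a ≤ ENNReal.ofReal N := by
        rw [ENNReal.ofReal_rpow_of_pos ht.2.1]; exact ENNReal.ofReal_le_ofReal (ha t ht)
      calc _ = ENNReal.ofReal (P t) ^ a * (ENNReal.ofReal (v t) ^ (-p') *
          ENNReal.ofReal (Δ m₁ m₂ t)) := by ring
        _ ≤ _ := by gcongr
    refine lt_of_le_of_lt this ?_
    rw [lintegral_const_mul' _ _ ENNReal.ofReal_ne_top]
    exact ENNReal.mul_lt_top ENNReal.ofReal_lt_top hvE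
  have hAfin : ∫⁻ t in E N, aF t < ⊤ := hbd _ fun t ht => ht.2.2.1
  have hDfin : DN < ⊤ := hbd _ fun t ht => ht.2.2.2
  have hDe : ∫⁻ t in Ioi (0:ℝ), ENNReal.ofReal (f t * P t * Δ m₁ m₂ t) = DN := by
    have : (fun t => ENNReal.ofReal (f t * P t * Δ m₁ m₂ t)) = (E N).indicator dF := by
      funext t
      by_cases ht : t ∈ E N
      · have hv1 := hv0 t ht.1.1
        have hP1 := ht.2.1
        have hD1 := auxΔ_pos m₁ m₂ t ht.1.1
        rw [indicator_of_mem ht, hf, indicator_of_mem ht]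
        simp only [hdF]
        rw [ENNReal.ofReal_rpow_of_pos hv1,
          ENNReal.ofReal_rpow_of_pos hP1, ← ENNReal.ofReal_mul (by positivity),
          ← ENNReal.ofReal_mul (by positivity), Real.rpow_add hP1, Real.rpow_one]
        congr 1; ring
      · rw [indicator_of_notMem ht, hfs t ht]; simp
    rw [this, setLIntegral_indicator (hEm N), hEI]
  have hn : 0 ≤ᵐ[volume.restrict (Ioi (0:ℝ))] fun t => f t * P t * Δ m₁ m₂ t := by
    refine (ae_restrict_iff' measurableSet_Ioi).2 (Filter.Eventually.of_forall fun t ht => ?_)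
    exact mul_nonneg (mul_nonneg (hf0 t) (hPn t ht)) (auxΔ_pos m₁ m₂ t ht).le
  have hmeas : Measurable fun t => f t * P t * Δ m₁ m₂ t := (hfm.mul hPm).mul hΔm
  have hint : Integrable (fun t => f t * P t * Δ m₁ m₂ t) (volume.restrict (Ioi 0)) := by
    refine ⟨hmeas.aestronglyMeasurable, ?_⟩
    rw [hasFiniteIntegral_iff_ofReal hn, hDe]; exact hDfin
  have hDi : ENNReal.ofReal (∫ t in Ioi (0:ℝ), f t * P t * Δ m₁ m₂ t) = DN := by
    rw [ofReal_integral_eq_lintegral_ofReal hint hn, hDe]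
  have hres := hPitt f hfm hf0 ⟨s, fun t ht => hfs t fun h => absurd h.1.2 (not_lt.2 ht)⟩
    (by rw [hAe]; exact hAfin) hint
  rw [hAe] at hres
  have hlow : ∀ lam ∈ Ioo (0:ℝ) (θ₀ / s), ENNReal.ofReal (Real.cos θ₀) * DN ≤
      (‖∫ t in Ioi (0:ℝ),
                (f t : ℂ) * PhiC m₁ m₂ ((lam : ℂ) + Complex.I * (η : ℝ)) t *
                  (Δ m₁ m₂ t : ℝ)‖₊ : ℝ≥0∞) := by
    intro lam hlam
    have hcos : ∀ t, t < s → ∀ r, 0 < r → r ≤ t → Real.cos θ₀ ≤ Real.cos (lam * r) := by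
      intro t hts r h0 hr
      have : lam * r ≤ θ₀ := by
        have h1 : lam * s ≤ θ₀ := by rw [← le_div_iff₀ hs]; exact hlam.2.le
        have h2 : lam * r ≤ lam * s := mul_le_mul_of_nonneg_left (by linarith) hlam.1.le
        linarith
      exact Real.cos_le_cos_of_nonneg_of_le_pi (mul_nonneg hlam.1.le h0.le) (by linarith) this
    have hk := (aux_key (volume.restrict (Ioi (0:ℝ)))
      (fun t => (f t : ℂ) * PhiC m₁ m₂ ((lam : ℂ) + Complex.I * (η : ℝ)) t * (Δ m₁ m₂ t : ℝ))
      (fun t => f t * P t * Δ m₁ m₂ t) (Real.cos θ₀) hcθ ?_ hmeas.aestronglyMeasurable ?_ ?_).1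
    · rw [← hDi, ← ENNReal.ofReal_mul hcθ.le, ← enorm_eq_nnnorm, ← ofReal_norm]
      exact ENNReal.ofReal_le_ofReal
        (hk.trans ((le_abs_self _).trans (Complex.abs_re_le_norm _)))
    · apply Measurable.aestronglyMeasurable
      have := auxPhi_meas m₁ m₂ ((lam : ℂ) + Complex.I * (η : ℝ))
      fun_prop
    · refine (ae_restrict_iff' measurableSet_Ioi).2 (Filter.Eventually.of_forall fun t ht => ?_)
      by_cases hts : t < s
      · have hb := auxPhi_bd m₁ m₂ hm₁ lam η t _ hcθ ht (hcos t hts)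
        rw [Complex.re_mul_ofReal, Complex.re_ofReal_mul, ← mul_assoc, mul_left_comm]
        exact mul_le_mul_of_nonneg_right (mul_le_mul_of_nonneg_left hb.1
          (hf0 t)) (auxΔ_pos m₁ m₂ t ht).le
      · have : f t = 0 := hfs t fun h => hts h.1.2
        simp [this]
    · refine (ae_restrict_iff' measurableSet_Ioi).2 (Filter.Eventually.of_forall fun t ht => ?_)
      by_cases hts : t < s
      · have hb := auxPhi_bd m₁ m₂ hm₁ lam η t _ hcθ ht (hcos t hts)
        rw [norm_mul, norm_mul, Complex.norm_of_nonneg (hf0 t),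
          Complex.norm_of_nonneg (auxΔ_pos m₁ m₂ t ht).le]
        exact mul_le_mul_of_nonneg_right (mul_le_mul_of_nonneg_left hb.2
          (hf0 t)) (auxΔ_pos m₁ m₂ t ht).le
      · have : f t = 0 := hfs t fun h => hts h.1.2
        simp [this]
  have hqpos : 0 < q := by linarith
  set G := ENNReal.ofReal (Real.cos θ₀) * DN with hG
  have hGtop : G ^ q ≠ ⊤ := ENNReal.rpow_ne_top_of_nonneg hqpos.le
    (ENNReal.mul_ne_top ENNReal.ofReal_ne_top hDfin.ne)
  have hlow2 : X * G ≤ ENNReal.ofReal C * (∫⁻ t in E N, aF t) ^ (1/p) := by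
    refine le_trans ?_ hres
    have e : X * G = ((∫⁻ lam in Ioo (0:ℝ) (θ₀/s),
            ENNReal.ofReal (u lam) ^ q * ENNReal.ofReal (densHC m₁ m₂ lam)) * G ^ q) ^ (1/q) := by
      rw [ENNReal.mul_rpow_of_nonneg _ _ (by positivity), ← ENNReal.rpow_mul,
        mul_one_div_cancel hqpos.ne', ENNReal.rpow_one]
    rw [e, ← lintegral_mul_const' _ _ hGtop]
    apply ENNReal.rpow_le_rpow _ (by positivity)
    refine le_trans ?_ (setLIntegral_le_lintegral (Ioo (0:ℝ) (θ₀/s)) _)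
    apply setLIntegral_mono' measurableSet_Ioo
    intro lam hlam
    have := ENNReal.rpow_le_rpow (hlow lam hlam) hqpos.le
    rw [mul_right_comm]
    gcongr
  have hc0 : ENNReal.ofReal (Real.cos θ₀) ≠ 0 := (ENNReal.ofReal_pos.2 hcθ).ne'
  calc X * DN = X * G / ENNReal.ofReal (Real.cos θ₀) := by
        rw [hG, mul_left_comm, mul_comm (ENNReal.ofReal _), ENNReal.mul_div_cancel_right hc0 ENNReal.ofReal_ne_top]
    _ ≤ ENNReal.ofReal C * (∫⁻ t in E N, aF t) ^ (1/p) / ENNReal.ofReal (Real.cos θ₀) := by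
        gcongr
    _ = _ := by
        rw [hK, ENNReal.ofReal_div_of_pos hcθ]; simp only [div_eq_mul_inv]; ring
end

section
/- Let m₁ ≥ 1 and m₂ ≥ 0 be integers, n = m₁ + m₂ + 1, ρ = (m₁ + 2m₂)/2, and let μ_Δ be the measure Δ(t) dt on (0,∞), where Δ(t) = (2 sinh t)^{m₁+m₂} (2 cosh t)^{m₂}. Let κ > 0 and let g(t) = t^{−κ} on (0,∞). Then there exist constants C₁, C₂ > 0 (depending on m₁, m₂, κ) such that the non-increasing rearrangement g* of g with respect to μ_Δ satisfies C₁ t^{−κ/n} ≤ g*(t) ≤ C₂ t^{−κ/n} for 0 < t ≤ e^{2ρ}, and C₁ (log t)^{−κ} ≤ g*(t) ≤ C₂ (log t)^{−κ} for t > e^{2ρ}. -/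
open MeasureTheory Set ENNReal

/-- The measure `Δ(t) dt` on `(0,∞)`, the radial part of the Haar measure. -/
noncomputable def μΔ (m₁ m₂ : ℕ) : Measure ℝ :=
  (volume.restrict (Ioi (0:ℝ))).withDensity (fun t => ENNReal.ofReal (Δ m₁ m₂ t))

/-- The non-increasing rearrangement of `f` with respect to `μ`:
`f*(t) = inf {α : μ({x : |f x| > α}) ≤ t}`. -/
noncomputable def rearr {X : Type*} [MeasurableSpace X] (μ : Measure X)
    (f : X → ℝ) (t : ℝ) : ℝ≥0∞ :=
  sInf {α : ℝ≥0∞ | μ {x | α < ENNReal.ofReal |f x|} ≤ ENNReal.ofReal t}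

lemma rearr_le_aux (μ : Measure ℝ) (hμ : μ (Iic 0) = 0) (κ : ℝ) (hκ : 0 < κ) (r t : ℝ) (hr : 0 < r)
    (h : μ (Ioc 0 r) ≤ ENNReal.ofReal t) :
    rearr μ (fun s => s ^ (-κ)) t ≤ ENNReal.ofReal (r ^ (-κ)) := by
  apply sInf_le
  refine le_trans ?_ h
  calc μ {x | ENNReal.ofReal (r ^ (-κ)) < ENNReal.ofReal |x ^ (-κ)|}
      ≤ μ (Iic 0 ∪ Ioc 0 r) := by
        apply measure_mono
        intro x hx
        simp only [mem_setOf_eq] at hx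
        by_cases h0 : x ≤ 0
        · exact Or.inl h0
        · right
          push Not at h0
          refine ⟨h0, ?_⟩
          by_contra hxr
          push Not at hxr
          apply absurd hx
          push Not
          apply ENNReal.ofReal_le_ofReal
          rw [abs_of_nonneg (Real.rpow_nonneg h0.le _)]
          exact Real.rpow_le_rpow_of_nonpos hr hxr.le (by linarith)
    _ ≤ μ (Iic 0) + μ (Ioc 0 r) := measure_union_le _ _
    _ = μ (Ioc 0 r) := by rw [hμ, zero_add]

lemma le_rearr_aux (μ : Measure ℝ) (κ : ℝ) (hκ : 0 < κ) (r t : ℝ)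
    (h : ENNReal.ofReal t < μ (Ioc 0 r)) :
    ENNReal.ofReal (r ^ (-κ)) ≤ rearr μ (fun s => s ^ (-κ)) t := by
  apply le_sInf
  intro α hα
  by_contra hlt
  push Not at hlt
  simp only [mem_setOf_eq] at hα
  apply absurd (lt_of_lt_of_le h (le_trans (measure_mono ?_) hα)) (lt_irrefl _)
  intro x hx
  simp only [mem_setOf_eq]
  refine lt_of_lt_of_le hlt ?_
  apply ENNReal.ofReal_le_ofReal
  rw [abs_of_nonneg (Real.rpow_nonneg hx.1.le _)]
  exact Real.rpow_le_rpow_of_nonpos hx.1 hx.2 (by linarith)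

lemma Δ_mono (m₁ m₂ : ℕ) {s r : ℝ} (hs : 0 ≤ s) (h : s ≤ r) : Δ m₁ m₂ s ≤ Δ m₁ m₂ r := by
  unfold Δ
  have h1 : 0 ≤ Real.sinh s := Real.sinh_nonneg_iff.2 hs
  have h2 : Real.sinh s ≤ Real.sinh r := Real.sinh_le_sinh.2 h
  have h3 : 0 < Real.cosh s := Real.cosh_pos s
  have h4 : Real.cosh s ≤ Real.cosh r := by
    rw [Real.cosh_le_cosh, abs_of_nonneg hs, abs_of_nonneg (hs.trans h)]; exact h
  have h5 := h1.trans h2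
  gcongr

lemma μΔ_apply (m₁ m₂ : ℕ) (a r : ℝ) (ha : 0 ≤ a) :
    μΔ m₁ m₂ (Ioc a r) = ∫⁻ s in Ioc a r, ENNReal.ofReal (Δ m₁ m₂ s) := by
  unfold μΔ
  rw [withDensity_apply _ measurableSet_Ioc, Measure.restrict_restrict measurableSet_Ioc]
  congr 2
  apply inter_eq_left.2
  intro x hx
  exact lt_of_le_of_lt ha hx.1

lemma μΔ_Iic (m₁ m₂ : ℕ) : μΔ m₁ m₂ (Iic 0) = 0 := by
  unfold μΔ
  rw [withDensity_apply _ measurableSet_Iic, Measure.restrict_restrict measurableSet_Iic]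
  have : Iic (0:ℝ) ∩ Ioi 0 = ∅ := by ext x; simp
  simp [this]

lemma V_le (m₁ m₂ : ℕ) (r : ℝ) (hr : 0 < r) :
    μΔ m₁ m₂ (Ioc 0 r) ≤ ENNReal.ofReal (r * Δ m₁ m₂ r) := by
  rw [μΔ_apply _ _ _ _ le_rfl]
  calc _ ≤ ∫⁻ s in Ioc 0 r, ENNReal.ofReal (Δ m₁ m₂ r) := by
        apply setLIntegral_mono measurable_const
        intro x hx
        exact ENNReal.ofReal_le_ofReal (Δ_mono _ _ hx.1.le hx.2)
    _ = _ := by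
        rw [setLIntegral_const, Real.volume_Ioc, sub_zero, mul_comm, ← ENNReal.ofReal_mul hr.le]

lemma le_V (m₁ m₂ : ℕ) (r : ℝ) (hr : 0 < r) :
    ENNReal.ofReal (r * Δ m₁ m₂ r) ≤ μΔ m₁ m₂ (Ioc 0 (2 * r)) := by
  refine le_trans ?_ (measure_mono (Ioc_subset_Ioc_left hr.le))
  rw [μΔ_apply _ _ _ _ hr.le]
  calc _ = ∫⁻ s in Ioc r (2 * r), ENNReal.ofReal (Δ m₁ m₂ r) := by
        rw [setLIntegral_const, Real.volume_Ioc, mul_comm, ENNReal.ofReal_mul' hr.le]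
        congr 2; ring
    _ ≤ _ := by
        apply setLIntegral_mono' measurableSet_Ioc
        intro x hx
        exact ENNReal.ofReal_le_ofReal (Δ_mono _ _ hr.le hx.1.le)

lemma Δ_le (m₁ m₂ : ℕ) (r : ℝ) (hr : 0 < r) :
    r * Δ m₁ m₂ r ≤ r ^ (m₁ + m₂ + 1) * (2 * Real.exp r) ^ (m₁ + 2 * m₂) := by
  have h1 : 0 ≤ 2 * Real.sinh r := by have := Real.sinh_nonneg_iff.2 hr.le; positivity
  have h2 : 2 * Real.sinh r ≤ r * (2 * Real.exp r) := by
    rw [Real.sinh_eq]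
    have := Real.add_one_le_exp (-(2*r))
    have e : Real.exp (-r) = Real.exp r * Real.exp (-(2*r)) := by
      rw [← Real.exp_add]; congr 1; ring
    rw [e]
    nlinarith [Real.exp_pos r]
  have h3 : 0 < 2 * Real.cosh r := by have := Real.cosh_pos r; positivity
  have h4 : 2 * Real.cosh r ≤ 2 * Real.exp r := by
    rw [Real.cosh_eq]
    have : Real.exp (-r) ≤ Real.exp r := Real.exp_le_exp.2 (by linarith)
    linarith
  calc r * Δ m₁ m₂ r ≤ r * ((r * (2 * Real.exp r)) ^ (m₁ + m₂) * (2 * Real.exp r) ^ m₂) := by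
        unfold Δ; gcongr
    _ = _ := by rw [mul_pow]; ring

lemma le_Δ (m₁ m₂ : ℕ) (r : ℝ) : (2 * Real.sinh r) ^ (m₁ + m₂) ≤ Δ m₁ m₂ r ∨ r ≤ 0 := by
  by_cases h : r ≤ 0
  · exact Or.inr h
  left
  push Not at h
  have h1 : 0 ≤ Real.sinh r := Real.sinh_nonneg_iff.2 h.le
  have h2 := Real.one_le_cosh r
  unfold Δ
  apply le_mul_of_one_le_right (by positivity)
  apply one_le_pow₀; linarith

/-- rearrangement of the polynomial weight `1/v_κ = t^{-κ}` with
respect to `Δ(t) dt`: it is `≍ t^{-κ/n}` for `t ≤ e^{2ρ}` and `≍ (log t)^{-κ}` for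
`t > e^{2ρ}`, where `n = m₁ + m₂ + 1`. -/
theorem stmt11 (m₁ m₂ : ℕ) (hm₁ : 1 ≤ m₁) (n : ℕ) (hn : n = m₁ + m₂ + 1)
    (κ : ℝ) (hκ : 0 < κ) :
    ∃ C₁ C₂ : ℝ, 0 < C₁ ∧ 0 < C₂ ∧
      (∀ t : ℝ, 0 < t → t ≤ Real.exp (2 * ρ₀ m₁ m₂) →
        ENNReal.ofReal (C₁ * t ^ (-(κ / n))) ≤ rearr (μΔ m₁ m₂) (fun s => s ^ (-κ)) t ∧
        rearr (μΔ m₁ m₂) (fun s => s ^ (-κ)) t ≤ ENNReal.ofReal (C₂ * t ^ (-(κ / n)))) ∧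
      (∀ t : ℝ, Real.exp (2 * ρ₀ m₁ m₂) < t →
        ENNReal.ofReal (C₁ * Real.log t ^ (-κ)) ≤ rearr (μΔ m₁ m₂) (fun s => s ^ (-κ)) t ∧
        rearr (μΔ m₁ m₂) (fun s => s ^ (-κ)) t ≤ ENNReal.ofReal (C₂ * Real.log t ^ (-κ))) := by
  obtain ⟨d, hd⟩ : ∃ d : ℕ, d = m₁ + 2 * m₂ := ⟨_, rfl⟩
  have hd1 : 1 ≤ d := by omega
  have hd1' : (1:ℝ) ≤ d := by exact_mod_cast hd1
  have hρ : 2 * ρ₀ m₁ m₂ = d := by unfold ρ₀; rw [hd]; push_cast; ring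
  rw [hρ]
  have hn0 : n ≠ 0 := by omega
  have hn1 : (1:ℝ) ≤ n := by exact_mod_cast (by omega : 1 ≤ n)
  have hnpos : (0:ℝ) < n := by linarith
  obtain ⟨a, ha⟩ : ∃ a : ℝ, a = ((6:ℝ) ^ d)⁻¹ := ⟨_, rfl⟩
  have ha0 : 0 < a := by rw [ha]; positivity
  have ha1 : a ≤ 1 := by rw [ha]; exact inv_le_one_of_one_le₀ (one_le_pow₀ (by norm_num))
  obtain ⟨c, hc⟩ : ∃ c : ℝ, c = 0.3 / (n + d) := ⟨_, rfl⟩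
  have hc0 : 0 < c := by rw [hc]; positivity
  have he3 : Real.exp 1 < 3 := by have := Real.exp_one_lt_d9; linarith
  refine ⟨4 ^ (-κ), a ^ (-κ) + c ^ (-κ), by positivity, by positivity, ?_, ?_⟩
  · intro t ht hte
    obtain ⟨u, hu⟩ : ∃ u : ℝ, u = t ^ (1 / (n:ℝ)) := ⟨_, rfl⟩
    have hu0 : 0 < u := by rw [hu]; positivity
    have hun : u ^ n = t := by
      rw [hu, one_div, Real.rpow_inv_natCast_pow ht.le hn0]
    have htu : t ^ (-(κ / n)) = u ^ (-κ) := by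
      rw [hu, ← Real.rpow_mul ht.le]; congr 1; field_simp
    rw [htu]
    constructor
    · have := le_rearr_aux (μΔ m₁ m₂) κ hκ (2 * u) t ?_
      · refine le_trans (ENNReal.ofReal_le_ofReal ?_) this
        rw [← Real.mul_rpow (by norm_num) hu0.le]
        exact Real.rpow_le_rpow_of_nonpos (by positivity) (by linarith) (by linarith)
      · refine lt_of_lt_of_le ?_ (le_V m₁ m₂ u hu0)
        have key : t < u * Δ m₁ m₂ u := by
          have h1 := (le_Δ m₁ m₂ u).resolve_right (not_le.2 hu0)
          have h2 : u ≤ Real.sinh u := Real.self_le_sinh_iff.2 hu0.le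
          have h3 : (2 * u) ^ (m₁ + m₂) ≤ (2 * Real.sinh u) ^ (m₁ + m₂) := by gcongr
          have h4 : (2:ℝ) ^ 1 ≤ 2 ^ (m₁ + m₂) := pow_le_pow_right₀ (by norm_num) (by omega)
          calc t = u ^ n := hun.symm
            _ < 2 * u ^ n := by have : 0 < u ^ n := by positivity
                                linarith
            _ ≤ 2 ^ (m₁ + m₂) * u ^ n := by gcongr; linarith
            _ = u * (2 * u) ^ (m₁ + m₂) := by rw [hn, mul_pow]; ring
            _ ≤ _ := by gcongr; exact h3.trans h1
        exact (ENNReal.ofReal_lt_ofReal_iff (ht.trans key)).2 key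
    · have := rearr_le_aux (μΔ m₁ m₂) (μΔ_Iic _ _) κ hκ (a * u) t (by positivity) ?_
      · refine le_trans this (ENNReal.ofReal_le_ofReal ?_)
        rw [Real.mul_rpow ha0.le hu0.le]
        gcongr
        have : 0 < c ^ (-κ) := by positivity
        linarith
      · refine (V_le m₁ m₂ (a * u) (by positivity)).trans (ENNReal.ofReal_le_ofReal ?_)
        refine (Δ_le m₁ m₂ (a * u) (by positivity)).trans ?_
        rw [← hn, ← hd]
        have hue : u ≤ Real.exp d := by
          by_contra hlt
          push Not at hlt
          have h1 : 1 ≤ u := (Real.one_le_exp (by positivity)).trans hlt.le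
          have := le_self_pow₀ h1 hn0
          linarith
        have hau : a * u ≤ 1 := by
          rw [ha, inv_mul_le_iff₀ (by positivity), mul_one]
          refine hue.trans ?_
          rw [← mul_one (d:ℝ), Real.exp_nat_mul]
          gcongr; linarith
        have he : 2 * Real.exp (a * u) ≤ 6 := by
          have := Real.exp_le_exp.2 hau
          linarith
        calc (a * u) ^ n * (2 * Real.exp (a * u)) ^ d ≤ (a * u) ^ n * 6 ^ d := by gcongr
          _ = a ^ n * 6 ^ d * t := by rw [mul_pow, hun]; ring
          _ ≤ a * 6 ^ d * t := by
              gcongr; exact pow_le_of_le_one ha0.le ha1 hn0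
          _ = t := by rw [ha, inv_mul_cancel₀ (by positivity), one_mul]
  · intro t hte
    have ht : 0 < t := (Real.exp_pos _).trans hte
    obtain ⟨L, hL⟩ : ∃ L : ℝ, L = Real.log t := ⟨_, rfl⟩
    have hLt : Real.exp L = t := by rw [hL, Real.exp_log ht]
    have hdL : (d:ℝ) < L := by rw [hL]; exact (Real.lt_log_iff_exp_lt ht).2 hte
    have hL1 : 1 < L := by linarith
    have hL0 : 0 < L := by linarith
    rw [← hL]
    constructor
    · have := le_rearr_aux (μΔ m₁ m₂) κ hκ (2 * (2 * L)) t ?_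
      · refine le_trans (ENNReal.ofReal_le_ofReal (le_of_eq ?_)) this
        rw [← Real.mul_rpow (by norm_num) hL0.le]
        congr 1; ring
      · refine lt_of_lt_of_le ?_ (le_V m₁ m₂ (2 * L) (by positivity))
        have key : t < (2 * L) * Δ m₁ m₂ (2 * L) := by
          have h1 := (le_Δ m₁ m₂ (2 * L)).resolve_right (by linarith)
          have h2 : L ≤ Real.sinh L := Real.self_le_sinh_iff.2 hL0.le
          have h3 : t ≤ 2 * Real.sinh (2 * L) := by
            rw [Real.sinh_two_mul]
            have : t ≤ 2 * Real.cosh L := by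
              rw [Real.cosh_eq, hLt]; have := Real.exp_pos (-L); linarith
            nlinarith [Real.cosh_pos L]
          have h5 : 1 ≤ 2 * Real.sinh (2 * L) := by
            have := (Real.add_one_le_exp L)
            linarith
          have h6 := le_self_pow₀ h5 (by omega : m₁ + m₂ ≠ 0)
          have h7 : t ≤ Δ m₁ m₂ (2 * L) := by linarith
          nlinarith
        exact (ENNReal.ofReal_lt_ofReal_iff (ht.trans key)).2 key
    · have := rearr_le_aux (μΔ m₁ m₂) (μΔ_Iic _ _) κ hκ (c * L) t (by positivity) ?_
      · refine le_trans this (ENNReal.ofReal_le_ofReal ?_)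
        rw [Real.mul_rpow hc0.le hL0.le]
        gcongr
        have : 0 < a ^ (-κ) := by positivity
        linarith
      · refine (V_le m₁ m₂ (c * L) (by positivity)).trans (ENNReal.ofReal_le_ofReal ?_)
        refine (Δ_le m₁ m₂ (c * L) (by positivity)).trans ?_
        rw [← hn, ← hd]
        have h1 : c * L ≤ Real.exp (c * L) := by
          have := Real.add_one_le_exp (c * L); linarith
        have h2 : (2:ℝ) ≤ Real.exp 0.7 := by
          rw [← Real.log_le_iff_le_exp (by norm_num)]
          have := Real.log_two_lt_d9; linarith
        calc (c * L) ^ n * (2 * Real.exp (c * L)) ^ d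
            ≤ (Real.exp (c * L)) ^ n * (Real.exp 0.7 * Real.exp (c * L)) ^ d := by gcongr
          _ = Real.exp (c * (n + d) * L + 0.7 * d) := by
              rw [← Real.exp_add, ← Real.exp_nat_mul, ← Real.exp_nat_mul, ← Real.exp_add]
              congr 1; ring
          _ ≤ Real.exp L := by
              apply Real.exp_le_exp.2
              rw [hc, div_mul_cancel₀ _ (by positivity)]
              linarith
          _ = t := hLt
end

section
/- Let m₁ ≥ 1 and m₂ ≥ 0 be integers, n = m₁ + m₂ + 1, ρ = (m₁ + 2m₂)/2, and let ν_c be the measure |c(λ)|^{−2} dλ on ℝ, where c(λ) = 2^{ρ−iλ} Γ((m₁+m₂+1)/2) Γ(iλ) / ( Γ((ρ+iλ)/2) Γ((m₁+2)/4 + iλ/2) ). Let σ > 0 and u_σ(λ) = |λ|^{−σ}. Then there exist constants C₁, C₂ > 0 (depending on m₁, m₂, σ) such that the non-increasing rearrangement u_σ* of u_σ with respect to ν_c satisfies C₁ t^{−σ/3} ≤ u_σ*(t) ≤ C₂ t^{−σ/3} for 0 < t ≤ 1, and C₁ t^{−σ/n} ≤ u_σ*(t) ≤ C₂ t^{−σ/n}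 for t > 1. -/
open MeasureTheory Set ENNReal

/-- The Plancherel measure `ν_c = |c(λ)|⁻² dλ` on `ℝ`. -/
noncomputable def νc (m₁ m₂ : ℕ) : Measure ℝ :=
  volume.withDensity (fun lam => ENNReal.ofReal (densHC m₁ m₂ lam))

theorem Q_lemma (y u v θ η : ℝ) (hu : 0 < u) (hv : 0 < v) (h0 : 0 ≤ θ) (h1 : 0 ≤ η)
    (h : θ + η = 1) :
    (u^2/(u^2+y^2))^θ * (v^2/(v^2+y^2))^η ≤ (θ*u+η*v)^2/((θ*u+η*v)^2+y^2) := by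
  have hw : 0 < θ*u+η*v := by
    rcases h0.eq_or_lt with h2 | h2
    · have : η = 1 := by linarith
      subst this; rw [← h2]; simpa using hv
    · have := mul_pos h2 hu
      have := mul_nonneg h1 hv.le
      linarith
  have hA : 0 < u^2+y^2 := by positivity
  have hB : 0 < v^2+y^2 := by positivity
  have e1 := Real.geom_mean_le_arith_mean2_weighted h0 h1 (p₁ := u^2/(u^2+y^2)) (p₂ := v^2/(v^2+y^2))
    (by positivity) (by positivity) h
  have e2 := Real.geom_mean_le_arith_mean2_weighted h0 h1 (p₁ := y^2/(u^2+y^2)) (p₂ := y^2/(v^2+y^2))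
    (by positivity) (by positivity) h
  have e3 := Real.geom_mean_le_arith_mean2_weighted h0 h1 (p₁ := u) (p₂ := v)
    hu.le hv.le h
  have e4 : (u^2/(u^2+y^2))^θ * (v^2/(v^2+y^2))^η * y^2 =
      ((y^2/(u^2+y^2))^θ * (y^2/(v^2+y^2))^η) * (u^θ * v^η)^2 := by
    have s1 : y^2 = (y^2)^θ * (y^2)^η := by
      rcases eq_or_ne y 0 with hy | hy
      · subst hy
        rcases h0.eq_or_lt with h2 | h2
        · have : η = 1 := by linarith
          subst this; rw [← h2]; simp
        · simp [Real.zero_rpow h2.ne']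
      · rw [← Real.rpow_add (by positivity), h, Real.rpow_one]
    have s2 : (u^θ * v^η)^2 = (u^2)^θ * (v^2)^η := by
      rw [mul_pow, ← Real.rpow_natCast_mul hu.le, ← Real.rpow_natCast_mul hv.le,
        ← Real.rpow_mul_natCast hu.le, ← Real.rpow_mul_natCast hv.le]
      ring_nf
    rw [s2]
    refine (congrArg (fun z => (u^2/(u^2+y^2))^θ * (v^2/(v^2+y^2))^η * z) s1).trans ?_
    rw [Real.div_rpow (by positivity) (by positivity), Real.div_rpow (by positivity) (by positivity),
      Real.div_rpow (by positivity) (by positivity), Real.div_rpow (by positivity) (by positivity)]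
    ring
  set P := (u^2/(u^2+y^2))^θ * (v^2/(v^2+y^2))^η
  set R := (y^2/(u^2+y^2))^θ * (y^2/(v^2+y^2))^η
  have hR : 0 ≤ R := by positivity
  have hPR : P + R ≤ 1 := by
    have : θ * (u^2/(u^2+y^2)) + η * (v^2/(v^2+y^2)) + (θ * (y^2/(u^2+y^2)) + η * (y^2/(v^2+y^2))) = 1 := by
      rw [← h]; field_simp; ring
    linarith
  have e5 : (u^θ * v^η)^2 ≤ (θ*u+η*v)^2 := by gcongr
  have e6 : R * (u^θ * v^η)^2 ≤ R * (θ*u+η*v)^2 := by gcongr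
  rw [le_div_iff₀ (by positivity)]
  nlinarith [mul_le_mul_of_nonneg_right hPR (sq_nonneg (θ*u+η*v))]

/-- squared modulus of Gamma -/
noncomputable def gg (a y : ℝ) : ℝ := ‖Complex.Gamma ((a:ℂ) + Complex.I * y)‖^2

theorem nsq (a y : ℝ) : ‖(a:ℂ) + Complex.I * y‖^2 = a^2+y^2 := by
  rw [← Complex.normSq_eq_norm_sq, Complex.normSq_apply]; simp; ring

theorem gg_pos {a : ℝ} (ha : 0 < a) (y : ℝ) : 0 < gg a y := by
  have : Complex.Gamma ((a:ℂ) + Complex.I * y) ≠ 0 :=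
    Complex.Gamma_ne_zero_of_re_pos (by simpa using ha)
  unfold gg; positivity

theorem gg_succ {a : ℝ} (ha : 0 < a) (y : ℝ) : gg (a+1) y = (a^2+y^2) * gg a y := by
  unfold gg
  rw [← nsq, ← mul_pow, ← norm_mul, ← Complex.Gamma_add_one]
  · push_cast; ring_nf
  · intro h
    have := congrArg Complex.re h
    simp at this; linarith

open Filter Topology in
theorem gg_lim {x : ℝ} (hx : 0 < x) (y : ℝ) :
    Tendsto (fun n : ℕ => ∏ j ∈ Finset.range (n+1), ((x+j)^2/((x+j)^2+y^2))) atTop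
      (𝓝 (gg x y / Real.Gamma x ^ 2)) := by
  have h1 := ((Complex.GammaSeq_tendsto_Gamma ((x:ℂ) + Complex.I * y)).norm.pow 2).div
    ((Complex.GammaSeq_tendsto_Gamma (x:ℂ)).norm.pow 2)
    (by simp [Complex.Gamma_ofReal, (Real.Gamma_pos_of_pos hx).ne'])
  have e : gg x y / Real.Gamma x ^ 2 = ‖Complex.Gamma ((x:ℂ) + Complex.I * y)‖ ^ 2 / ‖Complex.Gamma (x:ℂ)‖ ^ 2 := by
    simp [gg, Complex.Gamma_ofReal]
  rw [e]
  refine h1.congr' ?_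
  filter_upwards [eventually_gt_atTop 0] with n hn
  have hn' : (0:ℝ) < n := by exact_mod_cast hn
  have hf : (0:ℝ) < n.factorial := by exact_mod_cast n.factorial_pos
  have k (z : ℂ) : ‖(n:ℂ)^z‖ = (n:ℝ)^z.re := by
    have := Complex.norm_cpow_eq_rpow_re_of_pos hn' z
    simpa using this
  simp only [Complex.GammaSeq, norm_div, norm_mul, norm_prod, k, Pi.div_apply]
  have hp (j : ℕ) : 0 < x + j := by positivity
  have e1 (j : ℕ) : ‖(x:ℂ) + Complex.I * y + j‖ ^2 = (x+j)^2 + y^2 := by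
    rw [← nsq]; push_cast; ring_nf
  have e2 (j : ℕ) : ‖(x:ℂ) + j‖ ^2 = (x+j)^2 := by
    have := nsq (x+j) 0
    simpa using this
  simp only [div_pow, mul_pow, ← Finset.prod_pow, e1, e2, Finset.prod_div_distrib]
  have p1 : 0 < ∏ j ∈ Finset.range (n+1), (x+j)^2 := Finset.prod_pos fun j _ => by have := hp j; positivity
  have p2 : 0 < ∏ j ∈ Finset.range (n+1), ((x+j)^2+y^2) := Finset.prod_pos fun j _ => by have := hp j; positivity
  have p3 : 0 < (n:ℝ)^x := by positivity
  simp
  field_simp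

theorem gg_conc (y u v θ η : ℝ) (hu : 0 < u) (hv : 0 < v) (h0 : 0 ≤ θ) (h1 : 0 ≤ η)
    (h : θ + η = 1) (hw : 0 < θ*u+η*v) :
    (gg u y / Real.Gamma u ^ 2)^θ * (gg v y / Real.Gamma v ^ 2)^η ≤
      gg (θ*u+η*v) y / Real.Gamma (θ*u+η*v) ^ 2 := by
  have l1 := (gg_lim hu y).rpow_const (p := θ) (Or.inr h0)
  have l2 := (gg_lim hv y).rpow_const (p := η) (Or.inr h1)
  refine le_of_tendsto_of_tendsto' (l1.mul l2) (gg_lim hw y) fun n => ?_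
  rw [← Real.finsetProd_rpow _ _ (fun j _ => by positivity),
    ← Real.finsetProd_rpow _ _ (fun j _ => by positivity), ← Finset.prod_mul_distrib]
  refine Finset.prod_le_prod (fun j _ => by positivity) fun j _ => ?_
  have := Q_lemma y (u+j) (v+j) θ η (by positivity) (by positivity) h0 h1 h
  have e : θ*(u+j)+η*(v+j) = θ*u+η*v+j := by linear_combination (j:ℝ) * h
  rwa [e] at this

theorem comp_rpow (k s : ℝ) (hk : 0 < k) : ∃ c C : ℝ, 0 < c ∧ 0 < C ∧ ∀ x z : ℝ, 0 < x → 0 < z →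
    x ≤ k*z → z ≤ k*x → c * z^s ≤ x^s ∧ x^s ≤ C * z^s := by
  rcases le_total 0 s with hs | hs
  · refine ⟨(k^s)⁻¹, k^s, by positivity, by positivity, fun x z hx hz h1 h2 => ⟨?_, ?_⟩⟩
    · rw [inv_mul_le_iff₀ (by positivity), ← Real.mul_rpow hk.le hx.le]
      exact Real.rpow_le_rpow hz.le h2 hs
    · rw [← Real.mul_rpow hk.le hz.le]
      exact Real.rpow_le_rpow hx.le h1 hs
  · refine ⟨k^s, (k^s)⁻¹, by positivity, by positivity, fun x z hx hz h1 h2 => ⟨?_, ?_⟩⟩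
    · rw [← Real.mul_rpow hk.le hz.le]
      exact Real.rpow_le_rpow_of_nonpos hx h1 hs
    · rw [le_inv_mul_iff₀ (by positivity), ← Real.mul_rpow hk.le hx.le]
      exact Real.rpow_le_rpow_of_nonpos hz h2 hs

def PP (a : ℝ) : Prop := ∃ c C : ℝ, 0 < c ∧ 0 < C ∧ ∀ y : ℝ,
  c * ((1+y^2)^(a-1) * gg 1 y) ≤ gg a y ∧ gg a y ≤ C * ((1+y^2)^(a-1) * gg 1 y)

theorem sq_comp (a : ℝ) (ha : 0 < a) : ∃ k : ℝ, 0 < k ∧ ∀ y : ℝ, a^2+y^2 ≤ k*(1+y^2) ∧ 1+y^2 ≤ k*(a^2+y^2) := by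
  have h : 1/a^2*a^2 = 1 := by field_simp
  refine ⟨a^2+1+1/a^2, by positivity, fun y => ⟨?_, ?_⟩⟩
  · have : 0 < 1/a^2 := by positivity
    nlinarith [mul_nonneg this.le (sq_nonneg y), mul_nonneg (sq_nonneg a) (sq_nonneg y)]
  · have : 0 < 1/a^2 := by positivity
    nlinarith [mul_nonneg this.le (sq_nonneg y), mul_nonneg (sq_nonneg a) (sq_nonneg y), sq_nonneg (a^2)]

theorem PP_iff (a : ℝ) (ha : 0 < a) : PP a ↔ PP (a+1) := by
  obtain ⟨k, hk, hy⟩ := sq_comp a ha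
  have hg := gg_pos one_pos
  have e (y : ℝ) : (1+y^2)^(a+1-1) = (1+y^2) * (1+y^2)^(a-1) := by
    rw [← Real.rpow_one_add' (by positivity) (by simpa using ha.ne')]; ring_nf
  constructor
  · rintro ⟨c, C, hc, hC, h⟩
    refine ⟨c/k, C*k, by positivity, by positivity, fun y => ?_⟩
    have := hg y
    obtain ⟨h1, h2⟩ := h y
    obtain ⟨h3, h4⟩ := hy y
    rw [gg_succ ha, e]
    constructor
    · calc _ = ((1+y^2)/k) * (c * ((1+y^2)^(a-1) * gg 1 y)) := by ring
        _ ≤ _ := by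
          gcongr
          rwa [div_le_iff₀' hk]
    · calc _ ≤ (k*(1+y^2)) * (C * ((1+y^2)^(a-1) * gg 1 y)) := by
            have := gg_pos ha y
            gcongr
        _ = _ := by ring
  · rintro ⟨c, C, hc, hC, h⟩
    refine ⟨c/k, C*k, by positivity, by positivity, fun y => ?_⟩
    have := hg y
    obtain ⟨h1, h2⟩ := h y
    obtain ⟨h3, h4⟩ := hy y
    rw [gg_succ ha, e] at h1 h2
    have hp : 0 < 1+y^2 := by positivity
    have := gg_pos ha y
    constructor
    · rw [div_mul_eq_mul_div, div_le_iff₀ hk]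
      refine le_of_mul_le_mul_left ?_ hp
      calc _ = c * ((1+y^2) * (1+y^2)^(a-1) * gg 1 y) := by ring
        _ ≤ _ := h1
        _ ≤ (k*(1+y^2)) * gg a y := by gcongr
        _ = _ := by ring
    · refine le_of_mul_le_mul_left ?_ hp
      calc _ ≤ (k * (a^2+y^2)) * gg a y := by gcongr
        _ = k * ((a^2+y^2) * gg a y) := by ring
        _ ≤ k * (C * ((1+y^2) * (1+y^2)^(a-1) * gg 1 y)) := by gcongr
        _ = _ := by ring

theorem PP_base (s : ℝ) (hs : 0 ≤ s) (hs1 : s < 1) : PP (1+s) := by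
  obtain ⟨k, hk, hy⟩ := sq_comp (1+s) (by linarith)
  obtain ⟨c, C, hc, hC, h⟩ := comp_rpow k (1-s) hk
  have hG : 0 < Real.Gamma (1+s) := Real.Gamma_pos_of_pos (by linarith)
  have hG2 : 0 < Real.Gamma (2+s) := Real.Gamma_pos_of_pos (by linarith)
  have g2 (y : ℝ) : gg 2 y = (1+y^2) * gg 1 y := by
    have := gg_succ one_pos y
    norm_num at this; exact this
  refine ⟨Real.Gamma (1+s)^2, (c * (1/Real.Gamma (1+s)^2)^s * (1/Real.Gamma (2+s)^2)^(1-s))⁻¹, by positivity, by positivity, fun y => ⟨?_, ?_⟩⟩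
  · have := gg_conc y 1 2 (1-s) s one_pos two_pos (by linarith) hs (by ring) (by linarith)
    have e : (1-s)*1+s*2 = 1+s := by ring
    have hg := gg_pos one_pos y
    rw [e, le_div_iff₀ (by positivity), g2] at this
    refine le_trans (le_of_eq ?_) this
    simp only [Real.Gamma_one, Real.Gamma_two, one_pow, div_one]
    rw [Real.mul_rpow (by positivity) (by positivity)]
    have : gg 1 y = gg 1 y ^(1-s) * gg 1 y ^ s := by
      rw [← Real.rpow_add hg]; simp
    rw [show 1+s-1 = s by ring]
    conv_lhs => rw [this]
    ring
  · have := gg_conc y (1+s) (2+s) s (1-s) (by linarith) (by linarith) hs (by linarith) (by ring) (by nlinarith)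
    have e : s*(1+s)+(1-s)*(2+s) = 2 := by ring
    have hg := gg_pos one_pos y
    have hgs := gg_pos (show 0 < 1+s by linarith) y
    have e2 : gg (2+s) y = ((1+s)^2+y^2) * gg (1+s) y := by
      rw [← gg_succ (by linarith)]; ring_nf
    rw [e, g2, e2, Real.Gamma_two] at this
    obtain ⟨h1, h2⟩ := hy y
    obtain ⟨h3, -⟩ := h _ _ (by positivity) (by positivity) h1 h2
    have e3 : (gg (1+s) y / Real.Gamma (1+s)^2)^s * (((1+s)^2+y^2) * gg (1+s) y / Real.Gamma (2+s)^2)^(1-s)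
       = ((1/Real.Gamma (1+s)^2)^s * (1/Real.Gamma (2+s)^2)^(1-s)) * ((1+s)^2+y^2)^(1-s) * gg (1+s) y := by
      have : gg (1+s) y = gg (1+s) y ^s * gg (1+s) y ^ (1-s) := by
        rw [← Real.rpow_add hgs]; simp
      conv_rhs => rw [this]
      rw [div_eq_mul_one_div (gg (1+s) y), Real.mul_rpow (by positivity) (by positivity),
        div_eq_mul_one_div (((1+s)^2+y^2) * gg (1+s) y), Real.mul_rpow (by positivity) (by positivity),
        Real.mul_rpow (by positivity) (by positivity)]
      ring
    rw [e3] at this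
    have hp : 0 < 1+y^2 := by positivity
    rw [le_inv_mul_iff₀ (by positivity)]
    have hq : 0 < (1+y^2)^(1-s) := by positivity
    refine le_of_mul_le_mul_left ?_ hq
    have e4 : (1+y^2)^(1-s) * (1+y^2)^(1+s-1) = 1+y^2 := by
      rw [← Real.rpow_add hp]; simp
    calc _ = ((1/Real.Gamma (1+s)^2)^s * (1/Real.Gamma (2+s)^2)^(1-s)) * (c * (1+y^2)^(1-s)) * gg (1+s) y := by ring
      _ ≤ _ := by gcongr
      _ ≤ _ := this
      _ = _ := by rw [← mul_assoc, e4]; simp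

theorem PP_all (a : ℝ) (ha : 0 < a) : PP a := by
  rcases lt_or_ge a 1 with h | h
  · rw [PP_iff a ha, add_comm]; exact PP_base a ha.le h
  · have key : ∀ (m : ℕ) (b : ℝ), 1 ≤ b → b < m+2 → PP b := by
      intro m
      induction m with
      | zero =>
        intro b h1 h2
        have := PP_base (b-1) (by linarith) (by norm_num at h2; linarith)
        simpa using this
      | succ m ih =>
        intro b h1 h2
        push_cast at h2
        rcases lt_or_ge b 2 with h3 | h3
        · have := PP_base (b-1) (by linarith) (by linarith)
          simpa using this
        · have := (PP_iff (b-1) (by linarith)).1 (ih (b-1) (by linarith) (by linarith))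
          simpa using this
    obtain ⟨m, hm⟩ := exists_nat_gt a
    exact key m a h (by linarith)

theorem gg_zero (y : ℝ) (hy : y ≠ 0) : y^2 * gg 0 y = gg 1 y := by
  unfold gg
  have : Complex.Gamma (((1:ℝ):ℂ) + Complex.I * y) = (Complex.I * y) * Complex.Gamma (Complex.I * y) := by
    rw [← Complex.Gamma_add_one _ (by simpa using hy)]; push_cast; ring_nf
  rw [this]
  simp [mul_pow]

theorem gg_double (lam : ℝ) : gg 0 (lam/2) * gg (1/2) (lam/2) = 4 * Real.pi * gg 0 lam := by
  have h := Complex.Gamma_mul_Gamma_add_half (Complex.I * ((lam/2 : ℝ) : ℂ))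
  have e1 : 2 * (Complex.I * ((lam/2 : ℝ) : ℂ)) = Complex.I * lam := by push_cast; ring
  rw [e1] at h
  have h2 : ‖(2:ℂ)^(1 - Complex.I * lam)‖ = 2 := by
    have := Complex.norm_cpow_eq_rpow_re_of_pos (x := 2) two_pos (1 - Complex.I * lam)
    simpa using this
  unfold gg
  have h3 := congrArg (fun z => ‖z‖^2) h
  simp only [norm_mul, h2, mul_pow] at h3
  have h4 : ‖((√Real.pi : ℝ) : ℂ)‖^2 = Real.pi := by
    rw [Complex.norm_real, Real.norm_eq_abs, sq_abs, Real.sq_sqrt Real.pi_pos.le]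
  rw [h4] at h3
  have e2 : (((1/2 : ℝ)) : ℂ) + Complex.I * ((lam/2 : ℝ) : ℂ) = Complex.I * ((lam/2 : ℝ) : ℂ) + 1/2 := by
    push_cast; ring
  rw [e2]
  simp only [Complex.ofReal_zero, zero_add]
  rw [h3]; ring

theorem dens_eq (m₁ m₂ : ℕ) (lam : ℝ) :
    densHC m₁ m₂ lam = (((2:ℝ)^(ρ₀ m₁ m₂))^2 * ‖Complex.Gamma (((m₁ : ℂ) + m₂ + 1) / 2)‖^2)⁻¹ *
      (gg (ρ₀ m₁ m₂/2) (lam/2) * gg (((m₁:ℝ)+2)/4) (lam/2) / gg 0 lam) := by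
  unfold densHC cHC gg
  have h2 : ‖(2:ℂ)^((ρ₀ m₁ m₂ : ℂ) - Complex.I * lam)‖ = (2:ℝ)^(ρ₀ m₁ m₂) := by
    have := Complex.norm_cpow_eq_rpow_re_of_pos (x := 2) two_pos ((ρ₀ m₁ m₂ : ℂ) - Complex.I * lam)
    simpa using this
  rw [norm_div, norm_mul, norm_mul, norm_mul, h2]
  have e1 : ((ρ₀ m₁ m₂ / 2 : ℝ) : ℂ) + Complex.I * ((lam/2 : ℝ) : ℂ) = ((ρ₀ m₁ m₂ : ℂ) + Complex.I * lam) / 2 := by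
    push_cast; ring
  have e2 : (((m₁ + 2) / 4 : ℝ) : ℂ) + Complex.I * ((lam/2 : ℝ) : ℂ) = ((m₁ : ℂ) + 2) / 4 + Complex.I * lam / 2 := by
    push_cast; ring
  rw [e1, e2]
  simp only [Complex.ofReal_zero, zero_add]
  rw [zpow_neg, ← inv_zpow, inv_div]
  norm_cast
  rw [div_pow, mul_pow, mul_pow, mul_pow]
  simp only [div_eq_mul_inv, mul_inv]
  ring

theorem dens_bd (m₁ m₂ : ℕ) (hm₁ : 1 ≤ m₁) : ∃ c C : ℝ, 0 < c ∧ 0 < C ∧ ∀ lam : ℝ, lam ≠ 0 →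
    c * (lam^2 * ((1+|lam|)^(m₁+m₂-1) / (1+|lam|))) ≤ densHC m₁ m₂ lam ∧
    densHC m₁ m₂ lam ≤ C * (lam^2 * ((1+|lam|)^(m₁+m₂-1) / (1+|lam|))) := by
  have hm : (1:ℝ) ≤ m₁ := by exact_mod_cast hm₁
  have hρ : 0 < ρ₀ m₁ m₂ / 2 := by unfold ρ₀; positivity
  obtain ⟨c1, C1, hc1, hC1, H1⟩ := PP_all _ hρ
  obtain ⟨c2, C2, hc2, hC2, H2⟩ := PP_all (((m₁:ℝ)+2)/4) (by positivity)
  obtain ⟨c3, C3, hc3, hC3, H3⟩ := PP_all (1/2) (by positivity)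
  obtain ⟨c4, C4, hc4, hC4, H4⟩ := comp_rpow 8 (((m₁:ℝ)+m₂-2)/2) (by norm_num)
  set K : ℝ := (((2:ℝ)^(ρ₀ m₁ m₂))^2 * ‖Complex.Gamma (((m₁ : ℂ) + m₂ + 1) / 2)‖^2)⁻¹ with hK
  have hKp : 0 < K := by
    have : Complex.Gamma (((m₁ : ℂ) + m₂ + 1) / 2) ≠ 0 := by
      apply Complex.Gamma_ne_zero_of_re_pos
      have : ((m₁ : ℂ) + m₂ + 1) / 2 = ((((m₁:ℝ)+m₂+1)/2 : ℝ) : ℂ) := by push_cast; ring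
      rw [this, Complex.ofReal_re]; positivity
    positivity
  refine ⟨K * Real.pi * (c1*c2/C3) * c4, K * Real.pi * (C1*C2/c3) * C4, by positivity, by positivity, fun lam hl => ?_⟩
  have hy : lam/2 ≠ 0 := by simpa using hl
  have g1 := gg_pos one_pos (lam/2)
  have gh := gg_pos (show (0:ℝ) < 1/2 by norm_num) (lam/2)
  have ga := gg_pos hρ (lam/2)
  have ga' := gg_pos (show 0 < ((m₁:ℝ)+2)/4 by positivity) (lam/2)
  have e0 : gg 0 lam = gg 1 (lam/2) * gg (1/2) (lam/2) / (Real.pi * lam^2) := by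
    have h1 := gg_zero (lam/2) hy
    have h2 := gg_double lam
    rw [← h1, mul_assoc, h2]
    have := Real.pi_pos
    field_simp; norm_num
  rw [dens_eq, ← hK, e0]
  set y := lam/2 with hyd
  obtain ⟨h1, h1'⟩ := H1 y
  obtain ⟨h2, h2'⟩ := H2 y
  obtain ⟨h3, h3'⟩ := H3 y
  have hp : 0 < 1+y^2 := by positivity
  obtain ⟨h4, h4'⟩ := H4 (1+y^2) ((1+|lam|)^2) hp (by positivity)
    (by rw [hyd]; nlinarith [sq_abs lam, abs_nonneg lam]) (by rw [hyd]; nlinarith [sq_abs lam, abs_nonneg lam, sq_nonneg (|lam|-1)])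
  have e5 : (1+|lam|)^(m₁+m₂-1) / (1+|lam|) = ((1+|lam|)^2)^(((m₁:ℝ)+m₂-2)/2) := by
    have hq : 0 < 1+|lam| := by positivity
    rw [← Real.rpow_natCast_mul hq.le, ← Real.rpow_natCast, ← Real.rpow_sub_one hq.ne']
    congr 1
    rw [Nat.cast_sub (by omega)]; push_cast; ring
  rw [e5]
  set z := ((1+|lam|)^2)^(((m₁:ℝ)+m₂-2)/2)
  have e6 : (1+y^2)^(ρ₀ m₁ m₂/2-1) * (1+y^2)^(((m₁:ℝ)+2)/4-1) = (1+y^2)^((1:ℝ)/2-1) * (1+y^2)^(((m₁:ℝ)+m₂-2)/2) := by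
    rw [← Real.rpow_add hp, ← Real.rpow_add hp]; congr 1; unfold ρ₀; ring
  have hpi := Real.pi_pos
  have hl2 : 0 < lam^2 := by positivity
  have hz : 0 < z := by positivity
  set A := (1+y^2)^(ρ₀ m₁ m₂/2-1)
  set B := (1+y^2)^(((m₁:ℝ)+2)/4-1)
  set D := (1+y^2)^((1:ℝ)/2-1)
  set E := (1+y^2)^(((m₁:ℝ)+m₂-2)/2)
  have hA : 0 < A := by positivity
  have hB : 0 < B := by positivity
  have hD : 0 < D := by positivity
  have hE : 0 < E := by positivity
  have key : ∀ p q r s : ℝ, p * q / (r * s / (Real.pi * lam^2)) = Real.pi * lam^2 * (p * q / (r*s)) := by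
    intros; rw [div_div_eq_mul_div]; ring
  rw [key]
  constructor
  · calc _ = K * (Real.pi * lam^2 * ((c1*c2/C3) * (c4 * z))) := by ring
      _ ≤ K * (Real.pi * lam^2 * ((c1*c2/C3) * E)) := by gcongr
      _ = K * (Real.pi * lam^2 * ((c1 * (A * gg 1 y)) * (c2 * (B * gg 1 y)) / (gg 1 y * (C3 * (D * gg 1 y))))) := by
        have : c1 * (A * gg 1 y) * (c2 * (B * gg 1 y)) = c1 * c2 * (gg 1 y)^2 * (D * E) := by rw [← e6]; ring
        rw [this]; field_simp
      _ ≤ _ := by gcongr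
  · calc _ ≤ K * (Real.pi * lam^2 * ((C1 * (A * gg 1 y)) * (C2 * (B * gg 1 y)) / (gg 1 y * (c3 * (D * gg 1 y))))) := by gcongr
      _ = K * (Real.pi * lam^2 * ((C1*C2/c3) * E)) := by
        have : C1 * (A * gg 1 y) * (C2 * (B * gg 1 y)) = C1 * C2 * (gg 1 y)^2 * (D * E) := by rw [← e6]; ring
        rw [this]; field_simp
      _ ≤ K * (Real.pi * lam^2 * ((C1*C2/c3) * (C4 * z))) := by gcongr
      _ = _ := by ring

/-- comparison weight -/
noncomputable def WW (k : ℕ) (r : ℝ) : ℝ := r^2 * ((1+r)^k / (1+r))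

theorem WW_eq (k : ℕ) (r : ℝ) (hr : 0 ≤ r) : WW k r = (r * (1 - 1/(1+r))) * (1+r)^k := by
  unfold WW; field_simp; ring

theorem WW_mono (k : ℕ) {r s : ℝ} (hr : 0 ≤ r) (h : r ≤ s) : WW k r ≤ WW k s := by
  have hs := hr.trans h
  rw [WW_eq k r hr, WW_eq k s hs]
  have : 0 ≤ 1 - 1/(1+r) := by
    rw [sub_nonneg, div_le_one (by positivity)]; linarith
  have : 0 ≤ 1 - 1/(1+s) := by
    rw [sub_nonneg, div_le_one (by positivity)]; linarith
  have : 0 ≤ s * (1 - 1/(1+s)) := by positivity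
  gcongr

theorem WW_half (k : ℕ) {r : ℝ} (hr : 0 ≤ r) : WW k r ≤ 2^(k+2) * WW k (r/2) := by
  unfold WW
  have h1 : (1+r)^k ≤ 2^k * (1+r/2)^k := by
    rw [← mul_pow]; gcongr; linarith
  calc _ ≤ r^2 * ((2^k * (1+r/2)^k)/(1+r/2)) := by
        gcongr; linarith
    _ = _ := by ring

theorem nu_upper (m₁ m₂ k : ℕ) (C : ℝ) (hC : 0 < C) (h : ∀ lam : ℝ, lam ≠ 0 →
    densHC m₁ m₂ lam ≤ C * WW k |lam|) (r : ℝ) (hr : 0 < r) :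
    νc m₁ m₂ {x | 0 < |x| ∧ |x| < r} ≤ ENNReal.ofReal (2 * C * (r * WW k r)) := by
  have hm : MeasurableSet {x : ℝ | 0 < |x| ∧ |x| < r} :=
    (measurableSet_lt measurable_const measurable_norm).inter (measurableSet_lt measurable_norm measurable_const)
  unfold νc
  rw [withDensity_apply _ hm]
  calc _ ≤ ∫⁻ x in {x : ℝ | 0 < |x| ∧ |x| < r}, ENNReal.ofReal (C * WW k r) := by
        refine setLIntegral_mono' hm fun x hx => ENNReal.ofReal_le_ofReal ?_
        refine (h x (abs_pos.1 hx.1)).trans ?_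
        gcongr
        exact WW_mono k hx.1.le hx.2.le
    _ = ENNReal.ofReal (C * WW k r) * volume {x : ℝ | 0 < |x| ∧ |x| < r} := by simp
    _ ≤ ENNReal.ofReal (C * WW k r) * volume (Ioo (-r) r) := by
        gcongr
        intro x hx; exact abs_lt.1 hx.2
    _ = _ := by
        have : 0 ≤ C * WW k r := by unfold WW; positivity
        rw [Real.volume_Ioo, ← ENNReal.ofReal_mul this]; congr 1; ring

theorem nu_lower (m₁ m₂ k : ℕ) (c : ℝ) (hc : 0 < c) (h : ∀ lam : ℝ, lam ≠ 0 →
    c * WW k |lam| ≤ densHC m₁ m₂ lam) (r : ℝ) (hr : 0 < r) :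
    ENNReal.ofReal (c / 2^(k+3) * (r * WW k r)) ≤ νc m₁ m₂ {x | 0 < |x| ∧ |x| < r} := by
  have hW : 0 ≤ WW k (r/2) := by unfold WW; positivity
  calc _ ≤ ENNReal.ofReal (c * WW k (r/2)) * volume (Ioo (r/2) r) := by
        rw [Real.volume_Ioo, ← ENNReal.ofReal_mul (by positivity)]
        apply ENNReal.ofReal_le_ofReal
        calc _ ≤ c / 2^(k+3) * (r * (2^(k+2) * WW k (r/2))) := by
              gcongr; exact WW_half k hr.le
          _ = _ := by field_simp; ring
    _ = ∫⁻ x in Ioo (r/2) r, ENNReal.ofReal (c * WW k (r/2)) := by simp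
    _ ≤ ∫⁻ x in Ioo (r/2) r, ENNReal.ofReal (densHC m₁ m₂ x) := by
        refine setLIntegral_mono' measurableSet_Ioo fun x hx => ENNReal.ofReal_le_ofReal ?_
        have hx0 : 0 < x := by linarith [hx.1]
        refine le_trans ?_ (h x hx0.ne')
        gcongr
        exact WW_mono k (by positivity) (by rw [abs_of_pos hx0]; exact hx.1.le)
    _ = νc m₁ m₂ (Ioo (r/2) r) := by
        unfold νc; rw [withDensity_apply _ measurableSet_Ioo]
    _ ≤ _ := by
        apply measure_mono
        intro x hx
        have hx0 : 0 < x := by linarith [hx.1]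
        simp only [mem_ofPred_eq, abs_of_pos hx0]
        exact ⟨hx0, hx.2⟩

theorem lev (σ : ℝ) (hσ : 0 < σ) (r x : ℝ) (hr : 0 < r) :
    r^(-σ) < |x|^(-σ) ↔ 0 < |x| ∧ |x| < r := by
  rcases (abs_nonneg x).eq_or_lt with h | h
  · rw [← h, Real.zero_rpow (by linarith)]
    have : 0 < r^(-σ) := by positivity
    simp [this.le]
  · rw [Real.rpow_lt_rpow_iff_of_neg hr h (by linarith)]
    simp [h]

theorem rearr_upper (m₁ m₂ : ℕ) (σ : ℝ) (hσ : 0 < σ) (r t : ℝ) (hr : 0 < r)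
    (h : νc m₁ m₂ {x | 0 < |x| ∧ |x| < r} ≤ ENNReal.ofReal t) :
    rearr (νc m₁ m₂) (fun lam => |lam| ^ (-σ)) t ≤ ENNReal.ofReal (r^(-σ)) := by
  apply sInf_le
  refine le_trans (measure_mono ?_) h
  intro x hx
  simp only [mem_ofPred_eq] at hx ⊢
  rw [abs_of_nonneg (by positivity)] at hx
  exact (lev σ hσ r x hr).1 (ENNReal.ofReal_lt_ofReal_iff_of_nonneg (by positivity) |>.1 hx)

theorem rearr_lower (m₁ m₂ : ℕ) (σ : ℝ) (hσ : 0 < σ) (r t : ℝ) (hr : 0 < r)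
    (h : ENNReal.ofReal t < νc m₁ m₂ {x | 0 < |x| ∧ |x| < r}) :
    ENNReal.ofReal (r^(-σ)) ≤ rearr (νc m₁ m₂) (fun lam => |lam| ^ (-σ)) t := by
  apply le_sInf
  intro α hα
  by_contra! hlt
  refine absurd (lt_of_lt_of_le h ?_) (not_lt.2 hα)
  apply measure_mono
  intro x hx
  simp only [mem_ofPred_eq] at hx ⊢
  rw [abs_of_nonneg (by positivity)]
  exact hlt.trans_le (ENNReal.ofReal_le_ofReal ((lev σ hσ r x hr).2 hx).le)

/-- rearrangement of the weight `u_σ(λ) = |λ|^{-σ}` with respect to the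
Plancherel measure `|c(λ)|⁻² dλ`: it is `≍ t^{-σ/3}` for `t ≤ 1` and `≍ t^{-σ/n}` for
`t > 1`, where `n = m₁ + m₂ + 1`. -/
theorem stmt13 (m₁ m₂ : ℕ) (hm₁ : 1 ≤ m₁) (n : ℕ) (hn : n = m₁ + m₂ + 1)
    (σ : ℝ) (hσ : 0 < σ) :
    ∃ C₁ C₂ : ℝ, 0 < C₁ ∧ 0 < C₂ ∧
      (∀ t : ℝ, 0 < t → t ≤ 1 →
        ENNReal.ofReal (C₁ * t ^ (-(σ / 3))) ≤ rearr (νc m₁ m₂) (fun lam => |lam| ^ (-σ)) t ∧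
        rearr (νc m₁ m₂) (fun lam => |lam| ^ (-σ)) t ≤ ENNReal.ofReal (C₂ * t ^ (-(σ / 3)))) ∧
      (∀ t : ℝ, 1 < t →
        ENNReal.ofReal (C₁ * t ^ (-(σ / n))) ≤ rearr (νc m₁ m₂) (fun lam => |lam| ^ (-σ)) t ∧
        rearr (νc m₁ m₂) (fun lam => |lam| ^ (-σ)) t ≤ ENNReal.ofReal (C₂ * t ^ (-(σ / n)))) := by
  obtain ⟨c, C, hc, hC, H⟩ := dens_bd m₁ m₂ hm₁
  obtain ⟨k, hk⟩ : ∃ k, m₁ + m₂ - 1 = k := ⟨_, rfl⟩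
  have hnk : n = k + 2 := by omega
  rw [hk] at H
  have U := nu_upper m₁ m₂ k C hC (fun lam hl => by have := (H lam hl).2; unfold WW; rwa [sq_abs])
  have L := nu_lower m₁ m₂ k c hc (fun lam hl => by have := (H lam hl).1; unfold WW; rwa [sq_abs])
  set A := 2 * C with hA
  set B := c / 2^(k+3) with hB
  have hAp : 0 < A := by positivity
  have hBp : 0 < B := by positivity
  -- small radius
  obtain ⟨δ, hδ, hδ1, hδA⟩ : ∃ δ : ℝ, 0 < δ ∧ δ ≤ 1 ∧ A * 2^k * δ ≤ 1 := by
    refine ⟨min 1 (A * 2^k)⁻¹, by positivity, min_le_left _ _, ?_⟩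
    calc _ ≤ A * 2^k * (A * 2^k)⁻¹ := by gcongr; exact min_le_right _ _
      _ = 1 := by field_simp
  obtain ⟨K, hK1, hKB⟩ : ∃ K : ℝ, 1 ≤ K ∧ 2 < B * K := by
    refine ⟨1 + 2/B, by have : 0 < 2/B := by positivity
                        linarith, ?_⟩
    rw [mul_add, mul_div_cancel₀ _ hBp.ne']; linarith
  have hK : 0 < K := by linarith
  have main : ∀ (t p : ℝ), 0 < t → 
      (∀ T, T = t^(1/p) → A * (δ*T * WW k (δ*T)) ≤ t ∧ t < B * (K*T * WW k (K*T))) →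
      ENNReal.ofReal (K^(-σ) * t ^ (-(σ / p))) ≤ rearr (νc m₁ m₂) (fun lam => |lam| ^ (-σ)) t ∧
        rearr (νc m₁ m₂) (fun lam => |lam| ^ (-σ)) t ≤ ENNReal.ofReal (δ^(-σ) * t ^ (-(σ / p))) := by
    intro t p ht h
    obtain ⟨h1, h2⟩ := h _ rfl
    have hT : 0 < t^(1/p) := by positivity
    have e : t^(-(σ/p)) = (t^(1/p))^(-σ) := by
      rw [← Real.rpow_mul ht.le]; ring_nf
    rw [e, ← Real.mul_rpow hK.le hT.le, ← Real.mul_rpow hδ.le hT.le]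
    constructor
    · apply rearr_lower _ _ _ hσ _ _ (by positivity)
      refine lt_of_lt_of_le ?_ (L _ (by positivity))
      exact (ENNReal.ofReal_lt_ofReal_iff (ht.trans h2)).2 h2
    · apply rearr_upper _ _ _ hσ _ _ (by positivity)
      exact (U _ (by positivity)).trans (ENNReal.ofReal_le_ofReal h1)
  refine ⟨K^(-σ), δ^(-σ), by positivity, by positivity, fun t ht ht1 => main t 3 ht ?_, fun t ht => main t n (by linarith) ?_⟩
  · intro T hT
    have hTp : 0 < T := by rw [hT]; positivity
    have hT1 : T ≤ 1 := by rw [hT]; exact Real.rpow_le_one ht.le ht1 (by norm_num)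
    have hT3 : T^3 = t := by
      rw [hT, ← Real.rpow_mul_natCast ht.le]; norm_num
    unfold WW
    constructor
    · have hr : δ*T ≤ 1 := mul_le_one₀ hδ1 hTp.le hT1
      calc _ ≤ A * (δ*T * ((δ*T)^2 * ((1+1)^k/1))) := by
            gcongr
            have : 0 < δ*T := by positivity
            linarith
        _ = (A * 2^k * δ) * δ^2 * T^3 := by norm_num; ring
        _ ≤ 1 * 1^2 * T^3 := by gcongr
        _ = t := by rw [hT3]; ring
    · have hr : K*T ≤ K := mul_le_of_le_one_right hK.le hT1
      calc t = T^3 * 1 := by rw [hT3]; ring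
        _ < T^3 * ((B * K) / 2 * K) := by
            have : 1 < (B*K)/2 := by linarith
            gcongr
            nlinarith
        _ = B * (K*T * ((K*T)^2 * (1 / (2*K)))) := by field_simp
        _ ≤ _ := by
            gcongr
            · apply one_le_pow₀
              have : 0 < K*T := by positivity
              linarith
            · linarith
  · intro T hT
    have ht0 : 0 < t := by linarith
    have hn0 : (n:ℝ) ≠ 0 := by rw [hnk]; positivity
    have hTp : 0 < T := by rw [hT]; positivity
    have hT1 : 1 ≤ T := by rw [hT]; exact Real.one_le_rpow ht.le (by positivity)
    have hT3 : T^(k+2) = t := by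
      rw [hT, ← hnk, ← Real.rpow_mul_natCast ht0.le, one_div_mul_cancel hn0, Real.rpow_one]
    unfold WW
    constructor
    · have hr : δ*T ≤ T := mul_le_of_le_one_left hTp.le hδ1
      have hr0 : 0 < δ*T := by positivity
      calc _ ≤ A * (δ*T * ((δ*T)^2 * ((T+T)^k/(δ*T)))) := by
            gcongr
            linarith
        _ = (A * 2^k * δ) * δ * T^(k+2) := by
            rw [← two_mul, mul_pow 2 T k]; field_simp; ring
        _ ≤ 1 * 1 * T^(k+2) := by gcongr
        _ = t := by rw [hT3]; ring
    · have hr : 1 ≤ K*T := by nlinarith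
      calc t = T^(k+2) * 1 := by rw [hT3]; ring
        _ < T^(k+2) * ((B * K) / 2 * K) := by
            have : 1 < (B*K)/2 := by linarith
            gcongr
            nlinarith
        _ = B * (K*T * ((K*T)^2 * (T^k / (2*(K*T))))) := by field_simp; ring
        _ ≤ _ := by
            gcongr
            · nlinarith
            · linarith
end
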